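/- arXiv:2107.02090 — 12 statements merged into one kernel-verified Lean document; each statement's English description precedes it below -/
import Mathlib

section
/- Let μ ∈ ℝ and let f : M → ℝ be continuous. Suppose there exist continuous functions Xf, X²f, Vf, UVf : M → ℝ such that for every y ∈ M the following derivatives exist and equal the indicated functions: d/dτ f(φ_τ(y))|_{τ=0} = Xf(y), d/dτ (Xf)(φ_τ(y))|_{τ=0} = X²f(y), d/dτ f(hᵘ_τ(y))|_{τ=0} = Vf(y), and d/dτ (Vf)(h_τ(y))|_{τ=0} = UVf(y); and suppose the Casimir relation −X²f(y) + Xf(y) − UVf(y) = μ f(y) holds for all y ∈ M. Fix x ∈ M and set J(t) := ∫₀¹ f(φ_{-t}(h_s(x))) ds. Then J is twice differentiable and satisfies J''(t) + J'(t) + μ J(t) = e^{-t} [ Vf(φ_{-t}(x)) − Vf(φ_{-t}(h_1(x))) ] for every t ∈ ℝ, with initial conditions J(0) = ∫₀¹ f(h_s(x)) ds and J'(0) = −∫₀¹ Xf(h_s(x)) ds. -/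
/-! Since `upperMat s * diagMat (-t) = diagMat (-t) * upperMat (s * exp t)`, the flows satisfy
`φ_{-t} ∘ h_s = h_{s exp t} ∘ φ_{-t}`.  Differentiating `J` twice under the integral sign gives
`J' = -∫ Xf` and `J'' = ∫ X²f` along the curve `s ↦ φ_{-t} (h_s x)`
(`hasDerivAt_integral_geod`; compactness of `M` supplies the dominating constant).  The Casimir
relation turns `J'' + J' + μ J` into `-∫ UVf` along this curve, and the commutation relation shows
that `exp t * UVf (φ_{-t} (h_s x))` is the `s`-derivative of `Vf (φ_{-t} (h_s x))`
(`hasDerivAt_geod_horo`), so the fundamental theorem of calculus gives the boundary terms.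
-/

open MeasureTheory

noncomputable section

abbrev SL2R := Matrix.SpecialLinearGroup (Fin 2) ℝ

instance : TopologicalSpace SL2R :=
  TopologicalSpace.induced (fun g => (g : Matrix (Fin 2) (Fin 2) ℝ)) inferInstance

/-- The upper triangular unipotent matrix `[[1, t], [0, 1]]`. -/
def upperMat (t : ℝ) : SL2R :=
  ⟨!![1, t; 0, 1], by simp [Matrix.det_fin_two_of]⟩

/-- The diagonal matrix `[[e^{t/2}, 0], [0, e^{-t/2}]]`. -/
def diagMat (t : ℝ) : SL2R :=
  ⟨!![Real.exp (t / 2), 0; 0, Real.exp (-t / 2)], by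
    simp [Matrix.det_fin_two_of, ← Real.exp_add, neg_div]⟩

/-- The lower triangular unipotent matrix `[[1, 0], [t, 1]]`. -/
def lowerMat (t : ℝ) : SL2R :=
  ⟨!![1, 0; t, 1], by simp [Matrix.det_fin_two_of]⟩

/-- The homogeneous space `M = Γ\SL(2,ℝ)` of right cosets `Γg`,
with the quotient topology. -/
def Mspace (Γ : Subgroup SL2R) : Type :=
  Quotient (QuotientGroup.rightRel Γ)

instance (Γ : Subgroup SL2R) : TopologicalSpace (Mspace Γ) :=
  instTopologicalSpaceQuotient

/-- Right multiplication by `u ∈ SL(2,ℝ)` on `Γ\SL(2,ℝ)`. -/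
def Mspace.rtMul (Γ : Subgroup SL2R) (u : SL2R) : Mspace Γ → Mspace Γ :=
  Quotient.map (· * u) (by
    intro a b hab
    have h := QuotientGroup.rightRel_apply.mp hab
    exact QuotientGroup.rightRel_apply.mpr (by simpa [mul_inv_rev, mul_assoc] using h))

/-- The stable horocycle flow `h_t(Γg) = Γg·[[1, t], [0, 1]]`. -/
def horo (Γ : Subgroup SL2R) (t : ℝ) : Mspace Γ → Mspace Γ :=
  Mspace.rtMul Γ (upperMat t)

/-- The geodesic flow `φ_t(Γg) = Γg·[[e^{t/2}, 0], [0, e^{-t/2}]]`. -/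
def geod (Γ : Subgroup SL2R) (t : ℝ) : Mspace Γ → Mspace Γ :=
  Mspace.rtMul Γ (diagMat t)

/-- The unstable horocycle flow `hᵘ_t(Γg) = Γg·[[1, 0], [t, 1]]`. -/
def horoUnstable (Γ : Subgroup SL2R) (t : ℝ) : Mspace Γ → Mspace Γ :=
  Mspace.rtMul Γ (lowerMat t)

theorem rtMul_rtMul (Γ : Subgroup SL2R) (u v : SL2R) (y : Mspace Γ) :
    Mspace.rtMul Γ u (Mspace.rtMul Γ v y) = Mspace.rtMul Γ (v * u) y := by
  induction y using Quotient.inductionOn with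
  | h g => exact congrArg (Quotient.mk _) (mul_assoc g v u)

theorem coe_upperMat (t : ℝ) : (upperMat t : Matrix (Fin 2) (Fin 2) ℝ) = !![1, t; 0, 1] := rfl

theorem coe_diagMat (t : ℝ) : (diagMat t : Matrix (Fin 2) (Fin 2) ℝ) =
    !![Real.exp (t / 2), 0; 0, Real.exp (-t / 2)] := rfl

theorem upperMat_mul (a b : ℝ) : upperMat a * upperMat b = upperMat (a + b) := by
  refine Subtype.ext ?_
  rw [Matrix.SpecialLinearGroup.coe_mul]
  simp only [coe_upperMat, Matrix.mul_fin_two]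
  simp [add_comm]

theorem diagMat_mul (a b : ℝ) : diagMat a * diagMat b = diagMat (a + b) := by
  refine Subtype.ext ?_
  rw [Matrix.SpecialLinearGroup.coe_mul]
  simp only [coe_diagMat, Matrix.mul_fin_two, ← Real.exp_add, ← add_div, neg_add]
  simp

theorem upperMat_mul_diagMat (s t : ℝ) :
    upperMat s * diagMat (-t) = diagMat (-t) * upperMat (s * Real.exp t) := by
  have h : Real.exp (t / 2) = Real.exp (-t / 2) * Real.exp t := by
    rw [← Real.exp_add]; ring_nf
  refine Subtype.ext ?_
  rw [Matrix.SpecialLinearGroup.coe_mul, Matrix.SpecialLinearGroup.coe_mul]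
  simp only [coe_upperMat, coe_diagMat, Matrix.mul_fin_two, neg_neg, h]
  simp [mul_left_comm]

theorem geod_geod (Γ : Subgroup SL2R) (a b : ℝ) (y : Mspace Γ) :
    geod Γ a (geod Γ b y) = geod Γ (b + a) y := by
  simp only [geod, rtMul_rtMul, diagMat_mul]

theorem geod_zero (Γ : Subgroup SL2R) (y : Mspace Γ) : geod Γ 0 y = y := by
  have h : diagMat 0 = 1 := by
    ext i j
    fin_cases i <;> fin_cases j <;> simp [diagMat]
  induction y using Quotient.inductionOn with
  | h g => exact congrArg (Quotient.mk _) (by simp [h])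

theorem horo_zero (Γ : Subgroup SL2R) (y : Mspace Γ) : horo Γ 0 y = y := by
  have h : upperMat 0 = 1 := by
    ext i j
    fin_cases i <;> fin_cases j <;> simp [upperMat]
  induction y using Quotient.inductionOn with
  | h g => exact congrArg (Quotient.mk _) (by simp [h])

theorem horo_horo (Γ : Subgroup SL2R) (a b : ℝ) (y : Mspace Γ) :
    horo Γ a (horo Γ b y) = horo Γ (b + a) y := by
  simp only [horo, rtMul_rtMul, upperMat_mul]

/-- The geodesic flow at time `-t` conjugates the stable horocycle flow to itself, with time scaled
by `exp t`. -/
theorem geod_horo (Γ : Subgroup SL2R) (s t : ℝ) (y : Mspace Γ) :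
    geod Γ (-t) (horo Γ s y) = horo Γ (s * Real.exp t) (geod Γ (-t) y) := by
  simp only [horo, geod, rtMul_rtMul, upperMat_mul_diagMat]

theorem continuous_geod_horo (Γ : Subgroup SL2R) (t : ℝ) (x : Mspace Γ) :
    Continuous fun s : ℝ => geod Γ (-t) (horo Γ s x) := by
  induction x using Quotient.inductionOn with
  | h g =>
    have h : Continuous fun s : ℝ => g * upperMat s * diagMat (-t) := by
      refine continuous_induced_rng.mpr ?_
      change Continuous fun s : ℝ => (g : Matrix (Fin 2) (Fin 2) ℝ) * !![1, s; 0, 1] *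
        (diagMat (-t) : Matrix (Fin 2) (Fin 2) ℝ)
      have hm : Continuous fun s : ℝ => !![1, s; 0, 1] := by
        refine continuous_matrix fun i j => ?_
        fin_cases i <;> fin_cases j <;> simp <;> fun_prop
      exact (continuous_const.matrix_mul hm).matrix_mul continuous_const
    exact continuous_quotient_mk'.comp h

/-- The group law of the geodesic flow propagates differentiability at time `0` to all times. -/
theorem hasDerivAt_geod (Γ : Subgroup SL2R) {F F' : Mspace Γ → ℝ}
    (hD : ∀ y : Mspace Γ, HasDerivAt (fun τ : ℝ => F (geod Γ τ y)) (F' y) 0)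
    (t : ℝ) (y : Mspace Γ) :
    HasDerivAt (fun τ : ℝ => F (geod Γ (-τ) y)) (-F' (geod Γ (-t) y)) t := by
  have h := hD (geod Γ (-t) y)
  rw [← neg_add_cancel t, add_comm] at h
  have hs : HasDerivAt (fun τ : ℝ => t + -τ) (-1) t := (hasDerivAt_neg t).const_add t
  have h2 := h.comp t hs
  refine (h2.congr_deriv (by ring)).congr_of_eventuallyEq (Filter.Eventually.of_forall fun τ => ?_)
  simp [geod_geod]

/-- Differentiation under the integral sign along the geodesic flow; compactness of `M` bounds
the derivative uniformly. -/
theorem hasDerivAt_integral_geod (Γ : Subgroup SL2R) [CompactSpace (Mspace Γ)]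
    {F F' : Mspace Γ → ℝ} (hF : Continuous F) (hF' : Continuous F')
    (hD : ∀ y : Mspace Γ, HasDerivAt (fun τ : ℝ => F (geod Γ τ y)) (F' y) 0)
    (x : Mspace Γ) (t : ℝ) :
    HasDerivAt (fun t => ∫ s in (0:ℝ)..1, F (geod Γ (-t) (horo Γ s x)))
      (-∫ s in (0:ℝ)..1, F' (geod Γ (-t) (horo Γ s x))) t := by
  obtain ⟨C, hC⟩ := isCompact_univ.exists_bound_of_continuousOn hF'.continuousOn
  rw [← intervalIntegral.integral_neg]
  refine (intervalIntegral.hasDerivAt_integral_of_dominated_loc_of_deriv_le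
    (F' := fun t s => -F' (geod Γ (-t) (horo Γ s x))) (bound := fun _ => C)
    Filter.univ_mem ?_ ?_ ?_ ?_ ?_ ?_).2
  · exact Filter.Eventually.of_forall fun τ =>
      (hF.comp (continuous_geod_horo Γ τ x)).aestronglyMeasurable
  · exact (hF.comp (continuous_geod_horo Γ t x)).intervalIntegrable _ _
  · exact (hF'.comp (continuous_geod_horo Γ t x)).neg.aestronglyMeasurable
  · exact Filter.Eventually.of_forall fun s _ τ _ => by
      rw [norm_neg]; exact hC _ (Set.mem_univ _)
  · exact intervalIntegrable_const
  · exact Filter.Eventually.of_forall fun s _ τ _ => hasDerivAt_geod Γ hD τ _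

/-- Chain rule along `φ_{-t} (h_s x)` in `s`; the factor `exp t` is the rate at which `φ_{-t}`
expands stable horocycles. -/
theorem hasDerivAt_geod_horo (Γ : Subgroup SL2R) {F F' : Mspace Γ → ℝ}
    (hD : ∀ y : Mspace Γ, HasDerivAt (fun τ : ℝ => F (horo Γ τ y)) (F' y) 0)
    (x : Mspace Γ) (t s : ℝ) :
    HasDerivAt (fun s : ℝ => F (geod Γ (-t) (horo Γ s x)))
      (Real.exp t * F' (geod Γ (-t) (horo Γ s x))) s := by
  have h := hD (geod Γ (-t) (horo Γ s x))
  have hs : HasDerivAt (fun σ : ℝ => (σ - s) * Real.exp t) (Real.exp t) s := by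
    simpa using ((hasDerivAt_id s).sub_const s).mul_const (Real.exp t)
  have h0 : (0 : ℝ) = (s - s) * Real.exp t := by simp
  rw [h0] at h
  have h2 := h.comp s hs
  refine (h2.congr_deriv (mul_comm _ _)).congr_of_eventuallyEq
    (Filter.Eventually.of_forall fun σ => ?_)
  simp only [Function.comp, geod_horo, horo_horo]
  congr 2
  ring

/-- Ratner-type ODE for horocycle averages: if `f` is a Casimir eigenfunction
(in the sense that the iterated derivatives `Xf, X²f, Vf, UVf` exist, are
continuous, and satisfy `−X²f + Xf − UVf = μ f`), then for every `x ∈ M` the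
function `J(t) = ∫₀¹ f(φ_{-t}(h_s(x))) ds` is twice differentiable and
satisfies `J'' + J' + μJ = e^{-t}[Vf(φ_{-t}(x)) − Vf(φ_{-t}(h_1(x)))]`, with
`J(0) = ∫₀¹ f(h_s(x)) ds` and `J'(0) = −∫₀¹ Xf(h_s(x)) ds`. -/
theorem ratner_ode (Γ : Subgroup SL2R) (hΓ : CompactSpace (Mspace Γ))
    (μ : ℝ) (f Xf X2f Vf UVf : Mspace Γ → ℝ)
    (hf : Continuous f) (hXf : Continuous Xf) (hX2f : Continuous X2f)
    (hVf : Continuous Vf) (hUVf : Continuous UVf)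
    (hDX : ∀ y : Mspace Γ, HasDerivAt (fun τ : ℝ => f (geod Γ τ y)) (Xf y) 0)
    (hDX2 : ∀ y : Mspace Γ, HasDerivAt (fun τ : ℝ => Xf (geod Γ τ y)) (X2f y) 0)
    (hDV : ∀ y : Mspace Γ, HasDerivAt (fun τ : ℝ => f (horoUnstable Γ τ y)) (Vf y) 0)
    (hDUV : ∀ y : Mspace Γ, HasDerivAt (fun τ : ℝ => Vf (horo Γ τ y)) (UVf y) 0)
    (hCasimir : ∀ y : Mspace Γ, -X2f y + Xf y - UVf y = μ * f y)
    (x : Mspace Γ) (J : ℝ → ℝ)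
    (hJ : J = fun t => ∫ s in (0:ℝ)..1, f (geod Γ (-t) (horo Γ s x))) :
    ∃ J₁ J₂ : ℝ → ℝ,
      (∀ t : ℝ, HasDerivAt J (J₁ t) t) ∧
      (∀ t : ℝ, HasDerivAt J₁ (J₂ t) t) ∧
      (∀ t : ℝ, J₂ t + J₁ t + μ * J t =
        Real.exp (-t) * (Vf (geod Γ (-t) x) - Vf (geod Γ (-t) (horo Γ 1 x)))) ∧
      J 0 = ∫ s in (0:ℝ)..1, f (horo Γ s x) ∧
      J₁ 0 = -∫ s in (0:ℝ)..1, Xf (horo Γ s x) := by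
  have hc : ∀ {F : Mspace Γ → ℝ}, Continuous F → ∀ t : ℝ,
      IntervalIntegrable (fun s => F (geod Γ (-t) (horo Γ s x))) volume 0 1 := fun hF t =>
    (hF.comp (continuous_geod_horo Γ t x)).intervalIntegrable _ _
  refine ⟨fun t => -∫ s in (0:ℝ)..1, Xf (geod Γ (-t) (horo Γ s x)),
    fun t => ∫ s in (0:ℝ)..1, X2f (geod Γ (-t) (horo Γ s x)), ?_, ?_, ?_, ?_, ?_⟩
  · intro t
    rw [hJ]
    exact hasDerivAt_integral_geod Γ hf hXf hDX x t
  · intro t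
    exact (hasDerivAt_integral_geod Γ hXf hX2f hDX2 x t).neg.congr_deriv (neg_neg _)
  · intro t
    have hFTC := intervalIntegral.integral_eq_sub_of_hasDerivAt
      (fun s _ => hasDerivAt_geod_horo Γ hDUV x t s) ((hc hUVf t).const_mul (Real.exp t))
    rw [intervalIntegral.integral_const_mul, horo_zero] at hFTC
    have hCas : (∫ s in (0:ℝ)..1, X2f (geod Γ (-t) (horo Γ s x)))
        + -(∫ s in (0:ℝ)..1, Xf (geod Γ (-t) (horo Γ s x)))
        + μ * (∫ s in (0:ℝ)..1, f (geod Γ (-t) (horo Γ s x)))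
        = -∫ s in (0:ℝ)..1, UVf (geod Γ (-t) (horo Γ s x)) := by
      rw [← intervalIntegral.integral_const_mul, ← sub_eq_add_neg,
        ← intervalIntegral.integral_sub (hc hX2f t) (hc hXf t),
        ← intervalIntegral.integral_add ((hc hX2f t).sub (hc hXf t)) ((hc hf t).const_mul μ),
        ← intervalIntegral.integral_neg]
      refine intervalIntegral.integral_congr fun s _ => ?_
      simp only [← hCasimir]
      ring
    have he : Real.exp (-t) * Real.exp t = 1 := by rw [← Real.exp_add]; simp
    rw [hJ]
    simp only
    rw [hCas]
    linear_combination (-Real.exp (-t)) * hFTC +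
      (∫ s in (0:ℝ)..1, UVf (geod Γ (-t) (horo Γ s x))) * he
  · simp [hJ, geod_zero]
  · simp [geod_zero]
end
end

section
/- Suppose μ > 1/4, set ν_I := √(4μ − 1), and assume |G(t)| ≤ C for all t ≥ 0. Then the improper integrals D⁺ := −(2/ν_I) ∫₀^∞ e^{-ξ/2} sin(ν_I ξ / 2) G(ξ) dξ + J(0) and D⁻ := (2/ν_I) ∫₀^∞ e^{-ξ/2} cos(ν_I ξ / 2) G(ξ) dξ + (1/ν_I) J(0) + (2/ν_I) J'(0) converge absolutely, and for every t ≥ 0 one has | J(t) − e^{-t/2} cos(ν_I t / 2) D⁺ − e^{-t/2} sin(ν_I t / 2) D⁻ | ≤ (8 C / ν_I) e^{-t}. -/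
/-!
Put `ω = νI / 2` and `u(t) = e^{t/2} J(t)`. Since `μ = 1/4 + ω²`, the equation becomes
`u'' + ω² u = e^{-t/2} G`, so the two first-order quantities
`u' sin ωt - ω u cos ωt` and `u' cos ωt + ω u sin ωt`
are primitives of `e^{-t/2} sin(ωt) G` and `e^{-t/2} cos(ωt) G`
(`hasDeriv_sin_primitive`, `hasDeriv_cos_primitive`). The function `ω u` is recovered from them by
`sin · (second) - cos · (first)`. Replacing each increment over `[0, t]` by the full integral over
`[0, ∞)` costs a tail of size at most `2 C e^{-t/2}` (`tail_bound`); the two tails, divided by `ω`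
and multiplied by `e^{-t/2}`, add up to `8 C e^{-t} / νI`.
-/

open MeasureTheory

noncomputable section

lemma integrableOn_of_exp_bound {f : ℝ → ℝ} {C : ℝ} (hf : ContinuousOn f (Set.Ici 0))
    (hb : ∀ x ∈ Set.Ici (0:ℝ), |f x| ≤ C * Real.exp (-(1/2) * x)) :
    IntegrableOn f (Set.Ici 0) := by
  have he : IntegrableOn (fun x : ℝ => C * Real.exp (-(1/2) * x)) (Set.Ici 0) :=
    (integrableOn_Ici_iff_integrableOn_Ioi).2
      ((integrableOn_exp_mul_Ioi (by norm_num) 0).const_mul C)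
  refine Integrable.mono' he (hf.aestronglyMeasurable measurableSet_Ici) ?_
  exact (ae_restrict_iff' measurableSet_Ici).2 (.of_forall fun x hx => hb x hx)

/-- The increment over `[0, t]` of a primitive of `f` differs from the integral of `f` over
`[0, ∞)` by the tail of an exponential integral. -/
lemma tail_bound {f F : ℝ → ℝ} {C : ℝ} (hf : ContinuousOn f (Set.Ici 0))
    (hb : ∀ x ∈ Set.Ici (0:ℝ), |f x| ≤ C * Real.exp (-(1/2) * x))
    (hF : ∀ x ∈ Set.Ici (0:ℝ), HasDerivWithinAt F (f x) (Set.Ici 0) x)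
    {t : ℝ} (ht : 0 ≤ t) :
    |(∫ x in Set.Ici (0:ℝ), f x) - (F t - F 0)| ≤ 2 * C * Real.exp (-(1/2) * t) := by
  have hi := integrableOn_of_exp_bound hf hb
  have hi0 : IntegrableOn f (Set.Ioi 0) := hi.mono_set Set.Ioi_subset_Ici_self
  have hit : IntegrableOn f (Set.Ioi t) := hi0.mono_set (Set.Ioi_subset_Ioi ht)
  have hftc : ∫ x in (0:ℝ)..t, f x = F t - F 0 := by
    refine intervalIntegral.integral_eq_sub_of_hasDerivAt_of_le ht ?_ ?_ ?_
    · exact fun x hx => (hF x hx.1).continuousWithinAt.mono Set.Icc_subset_Ici_self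
    · exact fun x hx => (hF x hx.1.le).hasDerivAt (Ici_mem_nhds hx.1)
    · refine ContinuousOn.intervalIntegrable (hf.mono ?_)
      rw [Set.uIcc_of_le ht]
      exact Set.Icc_subset_Ici_self
  have hsplit := intervalIntegral.integral_Ioi_sub_Ioi hi0 ht
  have htail : (∫ x in Set.Ici (0:ℝ), f x) - (F t - F 0) = ∫ x in Set.Ioi t, f x := by
    rw [integral_Ici_eq_integral_Ioi]
    linarith
  have he : IntegrableOn (fun x : ℝ => C * Real.exp (-(1/2) * x)) (Set.Ioi t) :=
    (integrableOn_exp_mul_Ioi (by norm_num) t).const_mul C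
  rw [htail, ← Real.norm_eq_abs]
  calc ‖∫ x in Set.Ioi t, f x‖
      ≤ ∫ x in Set.Ioi t, C * Real.exp (-(1/2) * x) := by
        refine norm_integral_le_of_norm_le he ?_
        exact (ae_restrict_iff' measurableSet_Ioi).2
          (.of_forall fun x hx => hb x (ht.trans (le_of_lt hx)))
    _ = 2 * C * Real.exp (-(1/2) * t) := by
        rw [integral_const_mul, integral_exp_mul_Ioi (by norm_num)]
        ring

section Primitives

variable {J J' : ℝ → ℝ} {J₂ ν t : ℝ} {s : Set ℝ}

/-- With `u = e^{t/2} J`, this is the derivative of `u' sin ωt - ω u cos ωt`, `ω = ν / 2`; the last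
factor is the left side of the differential equation for `μ = 1/4 + ω²`. -/
lemma hasDeriv_sin_primitive (h1 : HasDerivWithinAt J (J' t) s t)
    (h2 : HasDerivWithinAt J' J₂ s t) :
    HasDerivWithinAt (fun x => Real.exp (x/2) *
        ((J' x + J x / 2) * Real.sin (ν * x / 2) - ν / 2 * J x * Real.cos (ν * x / 2)))
      (Real.exp (t/2) * Real.sin (ν * t / 2) * (J₂ + J' t + (1/4 + (ν/2)^2) * J t)) s t := by
  have hid := hasDerivWithinAt_id t s
  have he := (hid.div_const 2).exp
  have hs := ((hid.const_mul ν).div_const 2).sin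
  have hc := ((hid.const_mul ν).div_const 2).cos
  refine (he.mul (((h2.add (h1.div_const 2)).mul hs).sub
    ((h1.const_mul (ν/2)).mul hc))).congr_deriv ?_
  simp
  ring

/-- The companion of `hasDeriv_sin_primitive` for `u' cos ωt + ω u sin ωt`. -/
lemma hasDeriv_cos_primitive (h1 : HasDerivWithinAt J (J' t) s t)
    (h2 : HasDerivWithinAt J' J₂ s t) :
    HasDerivWithinAt (fun x => Real.exp (x/2) *
        ((J' x + J x / 2) * Real.cos (ν * x / 2) + ν / 2 * J x * Real.sin (ν * x / 2)))
      (Real.exp (t/2) * Real.cos (ν * t / 2) * (J₂ + J' t + (1/4 + (ν/2)^2) * J t)) s t := by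
  have hid := hasDerivWithinAt_id t s
  have he := (hid.div_const 2).exp
  have hs := ((hid.const_mul ν).div_const 2).sin
  have hc := ((hid.const_mul ν).div_const 2).cos
  refine (he.mul (((h2.add (h1.div_const 2)).mul hc).add
    ((h1.const_mul (ν/2)).mul hs))).congr_deriv ?_
  simp
  ring

end Primitives

/-- Asymptotics in the principal series case `μ > 1/4`: the improper integrals
defining `D⁺` and `D⁻` converge absolutely, and
`|J(t) − e^{-t/2}cos(ν_I t/2)D⁺ − e^{-t/2}sin(ν_I t/2)D⁻| ≤ (8C/ν_I)e^{-t}`. -/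
theorem principal_series_asymptotics (μ : ℝ) (G J J' J'' : ℝ → ℝ)
    (hG : ContinuousOn G (Set.Ici 0))
    (hJ' : ∀ t ∈ Set.Ici (0:ℝ), HasDerivWithinAt J (J' t) (Set.Ici 0) t)
    (hJ'' : ∀ t ∈ Set.Ici (0:ℝ), HasDerivWithinAt J' (J'' t) (Set.Ici 0) t)
    (hODE : ∀ t ∈ Set.Ici (0:ℝ), J'' t + J' t + μ * J t = Real.exp (-t) * G t)
    (hμ : 1/4 < μ) (νI : ℝ) (hνI : νI = Real.sqrt (4*μ - 1))
    (C : ℝ) (hC : ∀ t ∈ Set.Ici (0:ℝ), |G t| ≤ C) :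
    IntegrableOn (fun ξ => Real.exp (-ξ/2) * Real.sin (νI * ξ / 2) * G ξ) (Set.Ici 0) ∧
    IntegrableOn (fun ξ => Real.exp (-ξ/2) * Real.cos (νI * ξ / 2) * G ξ) (Set.Ici 0) ∧
    ∀ t ∈ Set.Ici (0:ℝ),
      |J t - Real.exp (-t/2) * Real.cos (νI * t / 2) *
            (-(2/νI) * (∫ ξ in Set.Ici (0:ℝ), Real.exp (-ξ/2) * Real.sin (νI * ξ / 2) * G ξ) + J 0)
           - Real.exp (-t/2) * Real.sin (νI * t / 2) *
            ((2/νI) * (∫ ξ in Set.Ici (0:ℝ), Real.exp (-ξ/2) * Real.cos (νI * ξ / 2) * G ξ)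
              + (1/νI) * J 0 + (2/νI) * J' 0)|
        ≤ 8 * C / νI * Real.exp (-t) := by

  have hν : 0 < νI := by rw [hνI]; exact Real.sqrt_pos.2 (by linarith)
  have hsq : 1/4 + (νI/2)^2 = μ := by
    rw [hνI, div_pow, Real.sq_sqrt (by linarith)]; ring
  have hmerge : ∀ x : ℝ, Real.exp (x/2) * Real.exp (-x) = Real.exp (-x/2) := fun x => by
    rw [← Real.exp_add]; ring_nf
  have hbound : ∀ w : ℝ → ℝ, (∀ x, |w x| ≤ 1) → ∀ x ∈ Set.Ici (0:ℝ),
      |Real.exp (-x/2) * w x * G x| ≤ C * Real.exp (-(1/2) * x) := by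
    intro w hw x hx
    rw [abs_mul, abs_mul, Real.abs_exp, show -(1/2) * x = -x/2 by ring]
    have h : |w x| * |G x| ≤ 1 * C :=
      mul_le_mul (hw x) (hC x hx) (abs_nonneg _) zero_le_one
    calc Real.exp (-x/2) * |w x| * |G x| = Real.exp (-x/2) * (|w x| * |G x|) := by ring
      _ ≤ Real.exp (-x/2) * (1 * C) := by gcongr
      _ = C * Real.exp (-x/2) := by ring
  have hbs := hbound (fun x => Real.sin (νI * x / 2)) fun x => Real.abs_sin_le_one _
  have hbc := hbound (fun x => Real.cos (νI * x / 2)) fun x => Real.abs_cos_le_one _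
  have hcs : ContinuousOn (fun x => Real.exp (-x/2) * Real.sin (νI * x / 2) * G x)
      (Set.Ici 0) := ContinuousOn.mul (by fun_prop) hG
  have hcc : ContinuousOn (fun x => Real.exp (-x/2) * Real.cos (νI * x / 2) * G x)
      (Set.Ici 0) := ContinuousOn.mul (by fun_prop) hG
  refine ⟨integrableOn_of_exp_bound hcs hbs, integrableOn_of_exp_bound hcc hbc, ?_⟩
  intro t ht
  have hS := tail_bound hcs hbs (fun x hx =>
    (hasDeriv_sin_primitive (ν := νI) (hJ' x hx) (hJ'' x hx)).congr_deriv (by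
      rw [hsq, hODE x hx, ← hmerge]; ring)) ht
  have hK := tail_bound hcc hbc (fun x hx =>
    (hasDeriv_cos_primitive (ν := νI) (hJ' x hx) (hJ'' x hx)).congr_deriv (by
      rw [hsq, hODE x hx, ← hmerge]; ring)) ht
  simp only [zero_div, mul_zero, Real.exp_zero, Real.sin_zero, Real.cos_zero] at hS hK
  generalize (∫ ξ in Set.Ici (0:ℝ), Real.exp (-ξ/2) * Real.sin (νI * ξ / 2) * G ξ) = S at hS ⊢
  generalize (∫ ξ in Set.Ici (0:ℝ), Real.exp (-ξ/2) * Real.cos (νI * ξ / 2) * G ξ) = K at hK ⊢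
  rw [show -(1/2) * t = -t/2 by ring] at hS hK
  have hinv : Real.exp (-t/2) * Real.exp (t/2) = 1 := by
    rw [← Real.exp_add]; ring_nf; exact Real.exp_zero
  have hdbl : Real.exp (-t) = Real.exp (-t/2) * Real.exp (-t/2) := by
    rw [← Real.exp_add]; ring_nf
  have hpy := Real.sin_sq_add_cos_sq (νI * t / 2)
  have hsin := Real.abs_sin_le_one (νI * t / 2)
  have hcos := Real.abs_cos_le_one (νI * t / 2)
  have hepos := Real.exp_pos (-t/2)
  rw [hdbl]
  generalize Real.exp (-t/2) = e at *
  generalize Real.exp (t/2) = E at *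
  generalize Real.sin (νI * t / 2) = s at *
  generalize Real.cos (νI * t / 2) = c at *
  set a := S - (E * ((J' t + J t / 2) * s - νI / 2 * J t * c) -
    1 * (0 - νI / 2 * J 0 * 1)) with ha
  set b := K - (E * ((J' t + J t / 2) * c + νI / 2 * J t * s) -
    1 * ((J' 0 + J 0 / 2) * 1 + 0)) with hb
  -- `a` and `b` are the tails over `[t, ∞)`; by variation of parameters they carry all the error.
  have key : J t - e * c * (-(2/νI) * S + J 0) - e * s * (2/νI * K + 1/νI * J 0 + 2/νI * J' 0)
      = 2 / νI * e * (c * a - s * b) := by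
    rw [ha, hb]
    field_simp
    linear_combination (-νI * J t * (s^2 + c^2)) * hinv - νI * J t * hpy
  have hca : |c * a| ≤ 2 * C * e := by
    rw [abs_mul]; exact (mul_le_of_le_one_left (abs_nonneg _) hcos).trans hS
  have hsb : |s * b| ≤ 2 * C * e := by
    rw [abs_mul]; exact (mul_le_of_le_one_left (abs_nonneg _) hsin).trans hK
  rw [key, abs_mul, abs_of_pos (by positivity : 0 < 2 / νI * e)]
  calc 2 / νI * e * |c * a - s * b| ≤ 2 / νI * e * (2 * C * e + 2 * C * e) := by
        gcongr
        exact (abs_sub _ _).trans (add_le_add hca hsb)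
    _ = 8 * C / νI * (e * e) := by ring
end
end

section
/- Suppose μ > 1/4 and assume, for some K ≥ 0, that |G(t)| ≤ 2K for all t ≥ 0, |J(0)| ≤ K, and |J'(0)| ≤ K. Then for every t ≥ 0 one has |J(t)| ≤ 9 K e^{-t/2} + 6 K t e^{-t/2}. -/
/-!
With `ω = √(μ - 1/4)`, the function `u = e^{t/2} J` solves the forced oscillator equation
`u'' + ω² u = e^{-t/2} G`. For a fixed time `T`, variation of parameters amounts to following
`φ(s) = u(s) cos (ω (T - s)) + u'(s) sin (ω (T - s)) / ω` from `s = 0` to `s = T`: one has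
`φ(T) = u(T)`, and `φ'(s) = e^{-s/2} G(s) sin (ω (T - s)) / ω`. Since `|sin (ω x) / ω| ≤ x` for
`x ≥ 0`, uniformly in `ω`, this gives `|φ(0)| ≤ K + (3/2) K T` and `|φ'(s)| ≤ 2 K T e^{-s/2}`.
Comparing `φ` with an antiderivative of the last bound, which avoids any integral, yields
`|u(T)| ≤ K + (11/2) K T`, stronger than the claim.
-/

open MeasureTheory

noncomputable section

lemma abs_sin_mul_div_le {ω x : ℝ} (hω : 0 < ω) (hx : 0 ≤ x) :
    |Real.sin (ω * x) / ω| ≤ x := by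
  rw [abs_div, abs_of_pos hω, div_le_iff₀ hω]
  calc |Real.sin (ω * x)| ≤ |ω * x| := Real.abs_sin_le_abs
    _ = x * ω := by rw [abs_of_nonneg (by positivity), mul_comm]

/-- A priori bound in the principal series case `μ > 1/4`:
`|J(t)| ≤ 9Ke^{-t/2} + 6Kte^{-t/2}`. -/
theorem principal_series_apriori_bound (μ : ℝ) (G J J' J'' : ℝ → ℝ)
    (hG : ContinuousOn G (Set.Ici 0))
    (hJ' : ∀ t ∈ Set.Ici (0:ℝ), HasDerivWithinAt J (J' t) (Set.Ici 0) t)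
    (hJ'' : ∀ t ∈ Set.Ici (0:ℝ), HasDerivWithinAt J' (J'' t) (Set.Ici 0) t)
    (hODE : ∀ t ∈ Set.Ici (0:ℝ), J'' t + J' t + μ * J t = Real.exp (-t) * G t)
    (hμ : 1/4 < μ) (K : ℝ) (hK : 0 ≤ K)
    (hGb : ∀ t ∈ Set.Ici (0:ℝ), |G t| ≤ 2*K)
    (hJ0 : |J 0| ≤ K) (hJ'0 : |J' 0| ≤ K) :
    ∀ t ∈ Set.Ici (0:ℝ),
      |J t| ≤ 9 * K * Real.exp (-t/2) + 6 * K * t * Real.exp (-t/2) := by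
  intro T hT
  have hT0 : (0:ℝ) ≤ T := hT
  obtain ⟨ω, hω, hω2⟩ : ∃ ω : ℝ, 0 < ω ∧ ω ^ 2 = μ - 1/4 :=
    ⟨√(μ - 1/4), Real.sqrt_pos.2 (by linarith), Real.sq_sqrt (by linarith)⟩
  set φ : ℝ → ℝ := fun s => Real.exp (s/2) *
    (J s * Real.cos (ω * (T - s)) + (J' s + J s / 2) * (Real.sin (ω * (T - s)) / ω)) with hφ
  have hφ' : ∀ s ∈ Set.Ici (0:ℝ), HasDerivWithinAt φ
      (Real.exp (-s/2) * G s * (Real.sin (ω * (T - s)) / ω)) (Set.Ici 0) s := by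
    intro s hs
    have hlin : HasDerivAt (fun s : ℝ => ω * (T - s)) (ω * (-1)) s :=
      ((hasDerivAt_id s).const_sub T).const_mul ω
    have hexp : HasDerivAt (fun s : ℝ => Real.exp (s/2)) (Real.exp (s/2) * (1/2)) s :=
      ((hasDerivAt_id s).div_const 2).exp
    have h := hexp.hasDerivWithinAt (s := Set.Ici 0) |>.mul
      (((hJ' s hs).mul hlin.cos.hasDerivWithinAt).add
        (((hJ'' s hs).add ((hJ' s hs).div_const 2)).mul
          (hlin.sin.div_const ω).hasDerivWithinAt))
    refine h.congr_deriv ?_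
    have hE : Real.exp (-s/2) * G s = Real.exp (s/2) * (J'' s + J' s + μ * J s) := by
      rw [hODE s hs, ← mul_assoc, ← Real.exp_add]
      ring_nf
    have hμ' : μ = ω ^ 2 + 1/4 := by linarith
    rw [hE, hμ']
    simp only [Pi.add_apply, Pi.mul_apply]
    field_simp
    ring
  have h0 : |φ 0| ≤ K + 3/2 * K * T := by
    have hs := abs_sin_mul_div_le hω hT0
    have hc := Real.abs_cos_le_one (ω * T)
    have hv : |J' 0 + J 0 / 2| ≤ 3/2 * K := by
      rw [abs_le] at *
      constructor <;> linarith
    simp only [hφ, zero_div, Real.exp_zero, one_mul, sub_zero]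
    refine (abs_add_le _ _).trans ?_
    rw [abs_mul, abs_mul]
    have h1 := mul_le_mul hJ0 hc (abs_nonneg _) hK
    have h2 := mul_le_mul hv hs (abs_nonneg _) (by positivity)
    linarith
  have hB : ∀ s : ℝ, HasDerivAt
      (fun s => K + 3/2 * K * T + 4 * K * T * (1 - Real.exp (-s/2)))
      (2 * K * T * Real.exp (-s/2)) s := by
    intro s
    have h := ((((hasDerivAt_id s).neg.div_const 2).exp.const_sub 1).const_mul
      (4 * K * T)).const_add (K + 3/2 * K * T)
    refine h.congr_deriv ?_
    simp only [Pi.neg_apply, id]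
    ring
  have key := image_norm_le_of_norm_deriv_right_le_deriv_boundary (a := 0) (b := T)
    (fun s hs => ((hφ' s hs.1).continuousWithinAt).mono Set.Icc_subset_Ici_self)
    (fun s hs => (hφ' s hs.1).mono (Set.Ici_subset_Ici.2 hs.1))
    (by simpa using h0) hB
    (fun s hs => by
      have hs' := (abs_sin_mul_div_le hω (sub_nonneg.2 hs.2.le)).trans
        (sub_le_self T hs.1)
      rw [Real.norm_eq_abs, abs_mul, abs_mul, Real.abs_exp]
      calc _ ≤ Real.exp (-s/2) * (2 * K) * T := by
            gcongr
            exact hGb s hs.1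
        _ = _ := by ring)
    (Set.right_mem_Icc.2 hT0)
  have hφT : φ T = Real.exp (T/2) * J T := by simp [hφ]
  rw [hφT, Real.norm_eq_abs, abs_mul, Real.abs_exp] at key
  have hKT : 0 ≤ K * T := mul_nonneg hK hT0
  have hu : Real.exp (T/2) * |J T| ≤ 9 * K + 6 * K * T := by
    nlinarith [mul_nonneg hKT (Real.exp_pos (-T/2)).le]
  have hcancel : Real.exp (-T/2) * Real.exp (T/2) = 1 := by
    rw [← Real.exp_add, ← Real.exp_zero]
    ring_nf
  calc |J T| = Real.exp (-T/2) * (Real.exp (T/2) * |J T|) := by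
        rw [← mul_assoc, hcancel, one_mul]
    _ ≤ Real.exp (-T/2) * (9 * K + 6 * K * T) := by gcongr
    _ = _ := by ring
end
end

section
/- Suppose μ = 1/4 and assume |G(t)| ≤ C for all t ≥ 0. Then the improper integrals D⁺ := −∫₀^∞ ξ e^{-ξ/2} G(ξ) dξ + J(0) and D⁻ := ∫₀^∞ e^{-ξ/2} G(ξ) dξ + (1/2) J(0) + J'(0) converge absolutely, and for every t ≥ 0 one has | J(t) − e^{-t/2} D⁺ − t e^{-t/2} D⁻ | ≤ 4 C (t + 2) e^{-t}. -/
open MeasureTheory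

noncomputable section

/-!
With `w t = e^{t/2} J t` the equation at `μ = 1/4` becomes `w'' = g`, where `g ξ = e^{-ξ/2} G ξ`.
Taylor's formula gives `w t = w 0 + t w' 0 + ∫₀ᵗ (t - ξ) g ξ dξ`. Completing the integral to
`[0, ∞)` produces exactly `D⁺ + t D⁻`, since `w 0 = J 0` and `w' 0 = J 0 / 2 + J' 0`, so the
remainder `w t - D⁺ - t D⁻` is the tail `∫_t^∞ (ξ - t) g ξ dξ`, of size at most
`C ∫_t^∞ (ξ - t) e^{-ξ/2} dξ = 4 C e^{-t/2}` (`integral_kernel`). Multiplying by `e^{-t/2}` yields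
the bound `4 C e^{-t}`, which is stronger than the one claimed.
-/

open Filter Topology Set

lemma hasDerivAt_exp_neg_half (x : ℝ) :
    HasDerivAt (fun ξ : ℝ => Real.exp (-ξ/2)) (Real.exp (-x/2) * (-1/2)) x :=
  (((hasDerivAt_id x).neg).div_const 2).exp

lemma hasDerivAt_kernel_primitive (t x : ℝ) :
    HasDerivAt (fun ξ : ℝ => (2 * t - 4 - 2 * ξ) * Real.exp (-ξ/2))
      ((x - t) * Real.exp (-x/2)) x := by
  have h := (((hasDerivAt_id x).const_mul 2).const_sub (2 * t - 4)).mul (hasDerivAt_exp_neg_half x)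
  refine h.congr_deriv ?_
  simp only [id]
  ring

lemma tendsto_kernel_primitive (t : ℝ) :
    Tendsto (fun ξ : ℝ => (2 * t - 4 - 2 * ξ) * Real.exp (-ξ/2)) atTop (𝓝 0) := by
  have hhalf : Tendsto (fun ξ : ℝ => ξ / 2) atTop atTop :=
    tendsto_id.atTop_div_const (by norm_num)
  have h0 := ((Real.tendsto_pow_mul_exp_neg_atTop_nhds_zero 0).comp hhalf).const_mul (2 * t - 4)
  have h1 := ((Real.tendsto_pow_mul_exp_neg_atTop_nhds_zero 1).comp hhalf).const_mul 4
  have h := h0.sub h1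
  simp only [mul_zero, sub_zero] at h
  refine h.congr fun ξ => ?_
  simp only [Function.comp, neg_div]
  ring

lemma integrableOn_kernel (t : ℝ) :
    IntegrableOn (fun ξ : ℝ => (ξ - t) * Real.exp (-ξ/2)) (Ioi t) :=
  integrableOn_Ioi_deriv_of_nonneg' (fun x _ => hasDerivAt_kernel_primitive t x)
    (fun _ hx => mul_nonneg (sub_nonneg.2 (le_of_lt hx)) (Real.exp_pos _).le)
    (tendsto_kernel_primitive t)

lemma integral_kernel (t : ℝ) :
    ∫ ξ in Ioi t, (ξ - t) * Real.exp (-ξ/2) = 4 * Real.exp (-t/2) := by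
  rw [integral_Ioi_of_hasDerivAt_of_tendsto' (fun x _ => hasDerivAt_kernel_primitive t x)
    (integrableOn_kernel t) (tendsto_kernel_primitive t)]
  ring

/-- A continuous weight times a bounded continuous function is integrable on the half-line as soon
as the weight is. -/
lemma integrableOn_mul_of_bounded {G k : ℝ → ℝ} {C : ℝ} (hG : ContinuousOn G (Ici 0))
    (hC : ∀ t ∈ Ici (0:ℝ), |G t| ≤ C) (hk : Continuous k) (hki : IntegrableOn k (Ioi 0)) :
    IntegrableOn (fun ξ => k ξ * G ξ) (Ici 0) := by
  rw [← integrableOn_Ici_iff_integrableOn_Ioi] at hki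
  refine Integrable.mono' (hki.norm.mul_const C)
    ((hk.continuousOn.mul hG).aestronglyMeasurable measurableSet_Ici) ?_
  filter_upwards [ae_restrict_mem measurableSet_Ici] with x hx
  rw [norm_mul]
  exact mul_le_mul_of_nonneg_left (hC x hx) (norm_nonneg _)

/-- Taylor's formula of order two with integral remainder for `w = e^{t/2} J`, whose second
derivative is `e^{-t/2} G`. -/
lemma taylor_exp_mul {G J J' J'' : ℝ → ℝ}
    (hG : ContinuousOn G (Ici 0))
    (hJ' : ∀ t ∈ Ici (0:ℝ), HasDerivWithinAt J (J' t) (Ici 0) t)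
    (hJ'' : ∀ t ∈ Ici (0:ℝ), HasDerivWithinAt J' (J'' t) (Ici 0) t)
    (hODE : ∀ t ∈ Ici (0:ℝ), J'' t + J' t + 1 / 4 * J t = Real.exp (-t) * G t)
    {t : ℝ} (ht : 0 ≤ t) :
    ∫ ξ in (0:ℝ)..t, (t - ξ) * (Real.exp (-ξ/2) * G ξ)
      = Real.exp (t/2) * J t - J 0 - t * (1 / 2 * J 0 + J' 0) := by
  have hE : ∀ x : ℝ, HasDerivAt (fun ξ : ℝ => Real.exp (ξ/2)) (Real.exp (x/2) * (1/2)) x :=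
    fun x => ((hasDerivAt_id x).div_const 2).exp
  -- The primitive is `w ξ + (t - ξ) w' ξ`.
  have hd : ∀ x ∈ Ici (0:ℝ), HasDerivWithinAt
      (fun ξ => Real.exp (ξ/2) * J ξ + (t - ξ) * (Real.exp (ξ/2) * (1 / 2 * J ξ + J' ξ)))
      ((t - x) * (Real.exp (-x/2) * G x)) (Ici 0) x := by
    intro x hx
    have e := (hE x).hasDerivWithinAt (s := Ici 0)
    have h := (e.mul (hJ' x hx)).add
      (((hasDerivWithinAt_id x (Ici 0)).const_sub t).mul
        (e.mul (((hJ' x hx).const_mul (1/2)).add (hJ'' x hx))))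
    refine h.congr_deriv ?_
    have hexp : Real.exp (-x/2) = Real.exp (x/2) * Real.exp (-x) := by
      rw [← Real.exp_add]; congr 1; ring
    simp only [id, Pi.add_apply, Pi.mul_apply]
    rw [hexp]
    linear_combination (t - x) * Real.exp (x/2) * hODE x hx
  have hsub : Icc 0 t ⊆ Ici (0:ℝ) := Icc_subset_Ici_self
  have hcont : ContinuousOn (fun ξ => (t - ξ) * (Real.exp (-ξ/2) * G ξ)) (Icc 0 t) :=
    (by fun_prop : Continuous fun ξ : ℝ => t - ξ).continuousOn.mul
      ((by fun_prop : Continuous fun ξ : ℝ => Real.exp (-ξ/2)).continuousOn.mul (hG.mono hsub))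
  rw [intervalIntegral.integral_eq_sub_of_hasDeriv_right_of_le ht
    (fun x hx => ((hd x (hsub hx)).continuousWithinAt).mono hsub)
    (fun x hx => (hd x hx.1.le).mono fun y hy => hx.1.le.trans (le_of_lt hy))
    (hcont.intervalIntegrable_of_Icc ht)]
  simp
  ring

/-- Asymptotics in the case `μ = 1/4`: the improper integrals defining `D⁺` and
`D⁻` converge absolutely, and `|J(t) − e^{-t/2}D⁺ − te^{-t/2}D⁻| ≤ 4C(t+2)e^{-t}`. -/
theorem quarter_asymptotics (μ : ℝ) (G J J' J'' : ℝ → ℝ)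
    (hG : ContinuousOn G (Set.Ici 0))
    (hJ' : ∀ t ∈ Set.Ici (0:ℝ), HasDerivWithinAt J (J' t) (Set.Ici 0) t)
    (hJ'' : ∀ t ∈ Set.Ici (0:ℝ), HasDerivWithinAt J' (J'' t) (Set.Ici 0) t)
    (hODE : ∀ t ∈ Set.Ici (0:ℝ), J'' t + J' t + μ * J t = Real.exp (-t) * G t)
    (hμ : μ = 1/4) (C : ℝ) (hC : ∀ t ∈ Set.Ici (0:ℝ), |G t| ≤ C) :
    IntegrableOn (fun ξ => ξ * Real.exp (-ξ/2) * G ξ) (Set.Ici 0) ∧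
    IntegrableOn (fun ξ => Real.exp (-ξ/2) * G ξ) (Set.Ici 0) ∧
    ∀ t ∈ Set.Ici (0:ℝ),
      |J t - Real.exp (-t/2) *
            (-(∫ ξ in Set.Ici (0:ℝ), ξ * Real.exp (-ξ/2) * G ξ) + J 0)
           - t * Real.exp (-t/2) *
            ((∫ ξ in Set.Ici (0:ℝ), Real.exp (-ξ/2) * G ξ) + (1/2) * J 0 + J' 0)|
        ≤ 4 * C * (t + 2) * Real.exp (-t) := by
  subst hμ
  have hk1 : IntegrableOn (fun ξ : ℝ => ξ * Real.exp (-ξ/2)) (Ioi 0) := by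
    simpa using integrableOn_kernel 0
  have hk0 : IntegrableOn (fun ξ : ℝ => Real.exp (-ξ/2)) (Ioi 0) := by
    refine (integrableOn_exp_mul_Ioi (a := -1/2) (by norm_num) 0).congr_fun (fun x _ => ?_)
      measurableSet_Ioi
    simp only
    congr 1
    ring
  have h1 := integrableOn_mul_of_bounded hG hC (by fun_prop) hk1
  have h0 := integrableOn_mul_of_bounded hG hC (by fun_prop) hk0
  refine ⟨h1, h0, fun t ht => ?_⟩
  replace ht : 0 ≤ t := ht
  have hI : IntegrableOn (fun ξ => (t - ξ) * (Real.exp (-ξ/2) * G ξ)) (Ici 0) := by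
    refine ((h0.const_mul t).sub h1).congr (ae_of_all _ fun x => ?_)
    simp only [Pi.sub_apply]
    ring
  have hsplit : (∫ ξ in Ici (0:ℝ), (t - ξ) * (Real.exp (-ξ/2) * G ξ))
      = t * (∫ ξ in Ici (0:ℝ), Real.exp (-ξ/2) * G ξ)
        - ∫ ξ in Ici (0:ℝ), ξ * Real.exp (-ξ/2) * G ξ := by
    rw [← integral_const_mul, ← integral_sub (h0.const_mul t) h1]
    congr 1
    ext x
    ring
  have hadd := intervalIntegral.integral_interval_add_Ioi (b := t)
    (hI.mono_set Ioi_subset_Ici_self) (hI.mono_set fun x hx => ht.trans (le_of_lt hx))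
  rw [taylor_exp_mul hG hJ' hJ'' hODE ht, ← integral_Ici_eq_integral_Ioi (x := (0:ℝ)), hsplit]
    at hadd
  have htail : |∫ ξ in Ioi t, (t - ξ) * (Real.exp (-ξ/2) * G ξ)| ≤ 4 * Real.exp (-t/2) * C := by
    rw [← integral_kernel t, ← integral_mul_const, ← Real.norm_eq_abs]
    refine norm_integral_le_of_norm_le ((integrableOn_kernel t).mul_const C) ?_
    filter_upwards [ae_restrict_mem measurableSet_Ioi] with x hx
    have hx' : t < x := hx
    rw [Real.norm_eq_abs, abs_mul, abs_mul, abs_of_pos (Real.exp_pos _), abs_sub_comm,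
      abs_of_pos (sub_pos.2 hx'), ← mul_assoc]
    exact mul_le_mul_of_nonneg_left (hC x (ht.trans hx'.le))
      (mul_nonneg (sub_pos.2 hx').le (Real.exp_pos _).le)
  set T := ∫ ξ in Ioi t, (t - ξ) * (Real.exp (-ξ/2) * G ξ)
  have hinv : Real.exp (-t/2) * Real.exp (t/2) = 1 := by
    rw [← Real.exp_add, ← Real.exp_zero]; congr 1; ring
  have hsq : Real.exp (-t/2) * Real.exp (-t/2) = Real.exp (-t) := by
    rw [← Real.exp_add]; congr 1; ring
  have hC0 : 0 ≤ C := (abs_nonneg _).trans (hC 0 (by simp))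
  have key : ∀ A B : ℝ,
      Real.exp (t/2) * J t - J 0 - t * (1 / 2 * J 0 + J' 0) + T = t * B - A →
      J t - Real.exp (-t/2) * (-A + J 0) - t * Real.exp (-t/2) * (B + (1/2) * J 0 + J' 0)
        = -(Real.exp (-t/2) * T) := by
    intro A B h
    linear_combination Real.exp (-t/2) * h - J t * hinv
  rw [key _ _ hadd, abs_neg, abs_mul, abs_of_pos (Real.exp_pos _)]
  calc Real.exp (-t/2) * |T| ≤ Real.exp (-t/2) * (4 * Real.exp (-t/2) * C) :=
        mul_le_mul_of_nonneg_left htail (Real.exp_pos _).le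
    _ = 4 * C * 1 * Real.exp (-t) := by rw [← hsq]; ring
    _ ≤ 4 * C * (t + 2) * Real.exp (-t) := by
        gcongr
        linarith
end
end

section
/- Suppose μ = (1 − ν²)/4 for some ν ∈ (0,1), and assume |G(t)| ≤ C for all t ≥ 0. Then the improper integrals D⁺ := −(1/ν) ∫₀^∞ e^{-(1−ν)ξ/2} G(ξ) dξ − ((1−ν)/(2ν)) J(0) − (1/ν) J'(0) and D⁻ := (1/ν) ∫₀^∞ e^{-(1+ν)ξ/2} G(ξ) dξ + ((1+ν)/(2ν)) J(0) + (1/ν) J'(0) converge absolutely, and for every t ≥ 0 one has | J(t) − e^{-(1+ν)t/2} D⁺ − e^{-(1−ν)t/2} D⁻ | ≤ (4 C / (ν(1 − ν²))) e^{-t}. -/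
/-!
Write `a = (1+ν)/2`, `b = (1-ν)/2`, so that `a + b = 1`, `a b = μ` and `a - b = ν`. The operator
factors as `(d/dt + a)(d/dt + b)`, hence `exp (a t) (J' + b J)` has derivative `exp (-b t) G`, and
likewise with `a` and `b` exchanged (`hasDerivWithinAt_first_integral`). Integrating up to `t` and
completing the integral to `[0, ∞)` costs a tail of size at most `(C/b) exp (-b t)`, respectively
`(C/a) exp (-a t)` (`abs_sub_integral_le`). Dividing by the integrating factors and subtracting
eliminates `J'` and leaves `ν J`; the error is `C (1/a + 1/b) exp (-t) = (C/(a b)) exp (-t)`, which is the stated bound after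
division by `ν`.
-/

open MeasureTheory

noncomputable section

lemma integrableOn_exp_mul {G : ℝ → ℝ} (hG : ContinuousOn G (Set.Ici 0)) {C : ℝ}
    (hC : ∀ t ∈ Set.Ici (0:ℝ), |G t| ≤ C) {k : ℝ} (hk : 0 < k) :
    IntegrableOn (fun ξ => Real.exp (-k * ξ) * G ξ) (Set.Ici 0) := by
  have he : IntegrableOn (fun ξ => Real.exp (-k * ξ)) (Set.Ici 0) := by
    rw [integrableOn_Ici_iff_integrableOn_Ioi]
    exact integrableOn_exp_mul_Ioi (neg_lt_zero.2 hk) 0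
  refine Integrable.mono' (he.mul_const C) ?_ ?_
  · exact ContinuousOn.aestronglyMeasurable (by fun_prop) measurableSet_Ici
  · refine (ae_restrict_iff' measurableSet_Ici).2 (Filter.Eventually.of_forall fun x hx => ?_)
    rw [Real.norm_eq_abs, abs_mul, Real.abs_exp]
    exact mul_le_mul_of_nonneg_left (hC x hx) (Real.exp_pos _).le

/-- A function with derivative `exp (-k t) G` approaches its limit `u 0 + ∫₀^∞ exp (-k ξ) G` at rate
`exp (-k t)`: the difference is the tail of the integral. -/
lemma abs_sub_integral_le {G : ℝ → ℝ} (hG : ContinuousOn G (Set.Ici 0)) {C : ℝ}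
    (hC : ∀ t ∈ Set.Ici (0:ℝ), |G t| ≤ C) {k : ℝ} (hk : 0 < k) {u : ℝ → ℝ}
    (hu : ∀ t ∈ Set.Ici (0:ℝ), HasDerivWithinAt u (Real.exp (-k * t) * G t) (Set.Ici 0) t)
    {t : ℝ} (ht : 0 ≤ t) :
    |u t - (u 0 + ∫ ξ in Set.Ici (0:ℝ), Real.exp (-k * ξ) * G ξ)| ≤ C / k * Real.exp (-k * t) := by
  have hint := integrableOn_exp_mul hG hC hk
  have hFTC : ∫ ξ in (0:ℝ)..t, Real.exp (-k * ξ) * G ξ = u t - u 0 := by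
    refine intervalIntegral.integral_eq_sub_of_hasDerivAt_of_le ht
      (fun x hx => ((hu x hx.1).continuousWithinAt).mono Set.Icc_subset_Ici_self)
      (fun x hx => (hu x hx.1.le).hasDerivAt (Ici_mem_nhds hx.1)) ?_
    rw [intervalIntegrable_iff_integrableOn_Icc_of_le ht]
    exact hint.mono_set Set.Icc_subset_Ici_self
  have hsplit := intervalIntegral.integral_interval_add_Ioi
    (hint.mono_set Set.Ioi_subset_Ici_self)
    (hint.mono_set (Set.Ioi_subset_Ici_self.trans (Set.Ici_subset_Ici.2 ht)))
  have htail : |∫ ξ in Set.Ioi t, Real.exp (-k * ξ) * G ξ| ≤ C / k * Real.exp (-k * t) := by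
    have h := norm_integral_le_of_norm_le (μ := volume.restrict (Set.Ioi t))
      (f := fun ξ => Real.exp (-k * ξ) * G ξ) (g := fun ξ => Real.exp (-k * ξ) * C)
      ((integrableOn_exp_mul_Ioi (neg_lt_zero.2 hk) t).mul_const C)
      ((ae_restrict_iff' measurableSet_Ioi).2 (Filter.Eventually.of_forall fun x hx => by
        rw [Real.norm_eq_abs, abs_mul, Real.abs_exp]
        exact mul_le_mul_of_nonneg_left (hC x (ht.trans (Set.mem_Ioi.1 hx).le))
          (Real.exp_pos _).le))
    rw [integral_mul_const, integral_exp_mul_Ioi (neg_lt_zero.2 hk), Real.norm_eq_abs] at h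
    refine h.trans (le_of_eq ?_)
    field_simp
  rw [integral_Ici_eq_integral_Ioi, ← hsplit, hFTC]
  rw [show ∀ I : ℝ, u t - (u 0 + (u t - u 0 + I)) = -I from fun I => by ring, abs_neg]
  exact htail

/-- Factorization of the ODE: multiplying `(d/dt + m)(d/dt + k) J` by the integrating factor
`exp (m t)` makes it a total derivative. -/
lemma hasDerivWithinAt_first_integral {μ : ℝ} {G J J' J'' : ℝ → ℝ}
    (hJ' : ∀ t ∈ Set.Ici (0:ℝ), HasDerivWithinAt J (J' t) (Set.Ici 0) t)
    (hJ'' : ∀ t ∈ Set.Ici (0:ℝ), HasDerivWithinAt J' (J'' t) (Set.Ici 0) t)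
    (hODE : ∀ t ∈ Set.Ici (0:ℝ), J'' t + J' t + μ * J t = Real.exp (-t) * G t)
    {m k : ℝ} (hsum : m + k = 1) (hprod : m * k = μ) :
    ∀ t ∈ Set.Ici (0:ℝ), HasDerivWithinAt (fun t => Real.exp (m * t) * (J' t + k * J t))
      (Real.exp (-k * t) * G t) (Set.Ici 0) t := by
  intro t ht
  have he : HasDerivWithinAt (fun t => Real.exp (m * t)) (Real.exp (m * t) * (m * 1))
      (Set.Ici 0) t := ((hasDerivWithinAt_id t _).const_mul m).exp
  refine (he.mul ((hJ'' t ht).add ((hJ' t ht).const_mul k))).congr_deriv ?_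
  have hexp : Real.exp (-k * t) = Real.exp (m * t) * Real.exp (-t) := by
    rw [← Real.exp_add]
    congr 1
    linear_combination (-t) * hsum
  rw [hexp, mul_assoc (Real.exp (m * t)) (Real.exp (-t)), ← hODE t ht, ← hprod]
  simp only [Pi.add_apply]
  linear_combination Real.exp (m * t) * J' t * hsum

/-- Asymptotics in the complementary series case `μ = (1 − ν²)/4`, `ν ∈ (0,1)`:
the improper integrals defining `D⁺` and `D⁻` converge absolutely, and
`|J(t) − e^{-(1+ν)t/2}D⁺ − e^{-(1−ν)t/2}D⁻| ≤ (4C/(ν(1−ν²)))e^{-t}`. -/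
theorem complementary_series_asymptotics (μ : ℝ) (G J J' J'' : ℝ → ℝ)
    (hG : ContinuousOn G (Set.Ici 0))
    (hJ' : ∀ t ∈ Set.Ici (0:ℝ), HasDerivWithinAt J (J' t) (Set.Ici 0) t)
    (hJ'' : ∀ t ∈ Set.Ici (0:ℝ), HasDerivWithinAt J' (J'' t) (Set.Ici 0) t)
    (hODE : ∀ t ∈ Set.Ici (0:ℝ), J'' t + J' t + μ * J t = Real.exp (-t) * G t)
    (ν : ℝ) (hν : ν ∈ Set.Ioo (0:ℝ) 1) (hμ : μ = (1 - ν^2)/4)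
    (C : ℝ) (hC : ∀ t ∈ Set.Ici (0:ℝ), |G t| ≤ C) :
    IntegrableOn (fun ξ => Real.exp (-(1-ν)*ξ/2) * G ξ) (Set.Ici 0) ∧
    IntegrableOn (fun ξ => Real.exp (-(1+ν)*ξ/2) * G ξ) (Set.Ici 0) ∧
    ∀ t ∈ Set.Ici (0:ℝ),
      |J t - Real.exp (-(1+ν)*t/2) *
            (-(1/ν) * (∫ ξ in Set.Ici (0:ℝ), Real.exp (-(1-ν)*ξ/2) * G ξ)
              - ((1-ν)/(2*ν)) * J 0 - (1/ν) * J' 0)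
           - Real.exp (-(1-ν)*t/2) *
            ((1/ν) * (∫ ξ in Set.Ici (0:ℝ), Real.exp (-(1+ν)*ξ/2) * G ξ)
              + ((1+ν)/(2*ν)) * J 0 + (1/ν) * J' 0)|
        ≤ 4 * C / (ν * (1 - ν^2)) * Real.exp (-t) := by
  obtain ⟨h0, h1⟩ := hν
  obtain ⟨a, ha⟩ : ∃ a, a = (1 + ν) / 2 := ⟨_, rfl⟩
  obtain ⟨b, hb⟩ : ∃ b, b = (1 - ν) / 2 := ⟨_, rfl⟩
  have ha0 : 0 < a := by linarith
  have hb0 : 0 < b := by linarith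
  have hab : a + b = 1 := by linarith
  have hprod : a * b = μ := by rw [ha, hb, hμ]; ring
  have hea : ∀ x : ℝ, -(1 + ν) * x / 2 = -a * x := fun x => by rw [ha]; ring
  have heb : ∀ x : ℝ, -(1 - ν) * x / 2 = -b * x := fun x => by rw [hb]; ring
  simp only [hea, heb]
  refine ⟨integrableOn_exp_mul hG hC hb0, integrableOn_exp_mul hG hC ha0, fun t ht => ?_⟩
  have hB := abs_sub_integral_le hG hC hb0
    (hasDerivWithinAt_first_integral hJ' hJ'' hODE hab hprod) ht
  have hA := abs_sub_integral_le hG hC ha0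
    (hasDerivWithinAt_first_integral hJ' hJ'' hODE ((add_comm b a).trans hab)
      ((mul_comm b a).trans hprod)) ht
  simp only [mul_zero, Real.exp_zero, one_mul] at hA hB
  set IA := ∫ ξ in Set.Ici (0:ℝ), Real.exp (-a * ξ) * G ξ
  set IB := ∫ ξ in Set.Ici (0:ℝ), Real.exp (-b * ξ) * G ξ
  set XA := Real.exp (b * t) * (J' t + a * J t) - (J' 0 + a * J 0 + IA) with hXA
  set XB := Real.exp (a * t) * (J' t + b * J t) - (J' 0 + b * J 0 + IB) with hXB
  have hea1 : Real.exp (-a * t) * Real.exp (a * t) = 1 := by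
    rw [← Real.exp_add]; simp
  have heb1 : Real.exp (-b * t) * Real.exp (b * t) = 1 := by
    rw [← Real.exp_add]; simp
  have het : Real.exp (-a * t) * Real.exp (-b * t) = Real.exp (-t) := by
    rw [← Real.exp_add]
    congr 1
    linear_combination (-t) * hab
  have hν' : ν = a - b := by rw [ha, hb]; ring
  -- The terms in `J'` cancel because `exp (-a t) exp (a t) = exp (-b t) exp (b t) = 1`.
  have key : J t - Real.exp (-a * t) *
        (-(1/ν) * IB - ((1-ν)/(2*ν)) * J 0 - (1/ν) * J' 0)
      - Real.exp (-b * t) * ((1/ν) * IA + ((1+ν)/(2*ν)) * J 0 + (1/ν) * J' 0)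
      = (1/ν) * (Real.exp (-b * t) * XA - Real.exp (-a * t) * XB) := by
    have e1 : (1-ν)/(2*ν) = b / ν := by rw [hb]; field_simp
    have e2 : (1+ν)/(2*ν) = a / ν := by rw [ha]; field_simp
    rw [e1, e2, hXA, hXB]
    generalize Real.exp (-a * t) = p, Real.exp (a * t) = p', Real.exp (-b * t) = q,
      Real.exp (b * t) = q' at hea1 heb1 ⊢
    field_simp
    linear_combination J t * hν' - (J' t + a * J t) * heb1 + (J' t + b * J t) * hea1
  have hC' : 4 * C / (ν * (1 - ν^2)) = (1/ν) * (C / a + C / b) := by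
    have h4 : 1 - ν^2 = 4 * (a * b) := by rw [ha, hb]; ring
    rw [h4]
    field_simp
    linear_combination (-C) * hab
  rw [key, abs_mul, abs_of_pos (one_div_pos.2 h0), hC', mul_assoc]
  refine mul_le_mul_of_nonneg_left ?_ (one_div_pos.2 h0).le
  calc |Real.exp (-b * t) * XA - Real.exp (-a * t) * XB|
      ≤ |Real.exp (-b * t) * XA| + |Real.exp (-a * t) * XB| := abs_sub _ _
    _ = Real.exp (-b * t) * |XA| + Real.exp (-a * t) * |XB| := by
        rw [abs_mul, abs_mul, Real.abs_exp, Real.abs_exp]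
    _ ≤ Real.exp (-b * t) * (C / a * Real.exp (-a * t))
        + Real.exp (-a * t) * (C / b * Real.exp (-b * t)) := by gcongr
    _ = (C / a + C / b) * Real.exp (-t) := by rw [← het]; ring
end
end

section
/- Suppose μ = (1 − ν²)/4 for some ν ∈ (0,1), and assume, for some K ≥ 0, that |G(t)| ≤ 2K for all t ≥ 0, |J(0)| ≤ K, and |J'(0)| ≤ K. Then for every t ≥ 0 one has |J(t)| ≤ (6/(1−ν)) K t e^{-(1−ν)t/2} + (9/(1−ν)²) K e^{-(1−ν)t/2}. -/
/-!
With `a = (1 - ν)/2` and `b = (1 + ν)/2` one has `a + b = 1` and `a * b = μ`, so the equation factors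
as `(D + a)(D + b) J = e^{-t} G`. The two first-order equations are integrated one after the other:
`u = J' + b J` satisfies `(e^{at} u)' = e^{-bt} G`, whence `|e^{at} u| ≤ 6K`, and then
`(e^{bt} J)' = e^{bt} u` has modulus at most `6K e^{νt}`, whence `|J| ≤ (K + 6Kt) e^{-at}`.
Successive integration, unlike the two-exponential Duhamel formula, involves no division by
`ν = b - a`, and with the factor `D + a` inverted first only `1/b ≤ 2` enters, not `1/a`. Both integrations are
comparisons of `|f'|` with the derivative of an explicit majorant (`abs_le_of_abs_deriv_le`).
-/

open MeasureTheory

noncomputable section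

/-- Integrating a derivative bound on the half-line: if `|f 0| ≤ B 0` and `|f'| ≤ B'`,
then `|f| ≤ B`. -/
lemma abs_le_of_abs_deriv_le {f f' B B' : ℝ → ℝ}
    (hf : ∀ t ∈ Set.Ici (0:ℝ), HasDerivWithinAt f (f' t) (Set.Ici 0) t)
    (hB : ∀ t, HasDerivAt B (B' t) t) (h0 : |f 0| ≤ B 0)
    (hle : ∀ t ∈ Set.Ici (0:ℝ), |f' t| ≤ B' t) :
    ∀ t ∈ Set.Ici (0:ℝ), |f t| ≤ B t := by
  intro t ht
  refine image_norm_le_of_norm_deriv_right_le_deriv_boundary (a := 0) (b := t) (f' := f')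
    (fun x hx => ((hf x hx.1).continuousWithinAt).mono Set.Icc_subset_Ici_self)
    (fun x hx => (hf x hx.1).mono (Set.Ici_subset_Ici.2 hx.1)) h0 hB
    (fun x hx => hle x hx.1) (Set.right_mem_Icc.2 ht)

/-- The derivative of `e^{ct} f`. -/
lemma hasDerivWithinAt_exp_mul {f : ℝ → ℝ} {d t : ℝ} {s : Set ℝ} (c : ℝ)
    (hf : HasDerivWithinAt f d s t) :
    HasDerivWithinAt (fun x => Real.exp (c * x) * f x) (Real.exp (c * t) * (d + c * f t)) s t := by
  have h : HasDerivWithinAt (fun x : ℝ => Real.exp (c * x)) (Real.exp (c * t) * (c * 1)) s t :=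
    (((hasDerivAt_id' t).const_mul c).exp).hasDerivWithinAt
  exact (h.mul hf).congr_deriv (by ring)

/-- A priori bound in the complementary series case `μ = (1 − ν²)/4`, `ν ∈ (0,1)`:
`|J(t)| ≤ (6/(1−ν))Kte^{-(1−ν)t/2} + (9/(1−ν)²)Ke^{-(1−ν)t/2}`. -/
theorem complementary_series_apriori_bound (μ : ℝ) (G J J' J'' : ℝ → ℝ)
    (hG : ContinuousOn G (Set.Ici 0))
    (hJ' : ∀ t ∈ Set.Ici (0:ℝ), HasDerivWithinAt J (J' t) (Set.Ici 0) t)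
    (hJ'' : ∀ t ∈ Set.Ici (0:ℝ), HasDerivWithinAt J' (J'' t) (Set.Ici 0) t)
    (hODE : ∀ t ∈ Set.Ici (0:ℝ), J'' t + J' t + μ * J t = Real.exp (-t) * G t)
    (ν : ℝ) (hν : ν ∈ Set.Ioo (0:ℝ) 1) (hμ : μ = (1 - ν^2)/4)
    (K : ℝ) (hK : 0 ≤ K)
    (hGb : ∀ t ∈ Set.Ici (0:ℝ), |G t| ≤ 2*K)
    (hJ0 : |J 0| ≤ K) (hJ'0 : |J' 0| ≤ K) :
    ∀ t ∈ Set.Ici (0:ℝ),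
      |J t| ≤ (6/(1-ν)) * K * t * Real.exp (-(1-ν)*t/2)
            + (9/(1-ν)^2) * K * Real.exp (-(1-ν)*t/2) := by
  obtain ⟨hν0, hν1⟩ := hν
  obtain ⟨a, ha⟩ : ∃ a, a = (1 - ν) / 2 := ⟨_, rfl⟩
  obtain ⟨b, hb⟩ : ∃ b, b = (1 + ν) / 2 := ⟨_, rfl⟩
  have hb2 : 1 / 2 ≤ b := by linarith
  have hb1 : b ≤ 1 := by linarith
  have hab : a = 1 - b := by linarith
  have hu : ∀ t ∈ Set.Ici (0:ℝ), |Real.exp (a * t) * (J' t + b * J t)| ≤ 6 * K := by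
    -- The majorant has derivative `4Kb e^{-bt} ≥ 2K e^{-bt}`, since `b ≥ 1/2`.
    have key := abs_le_of_abs_deriv_le
      (f := fun t => Real.exp (a * t) * (J' t + b * J t))
      (f' := fun t => Real.exp (a * t) * ((J'' t + b * J' t) + a * (J' t + b * J t)))
      (B := fun t => 6 * K - 4 * K * Real.exp (-b * t))
      (B' := fun t => 4 * K * b * Real.exp (-b * t))
      (fun t ht => hasDerivWithinAt_exp_mul a ((hJ'' t ht).add ((hJ' t ht).const_mul b)))
      (fun t => by
        have h := ((((hasDerivAt_id' t).const_mul (-b)).exp).const_mul (4 * K)).const_sub (6 * K)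
        exact h.congr_deriv (by ring))
      (by
        have h1 : |J' 0 + b * J 0| ≤ |J' 0| + b * |J 0| := by
          refine (abs_add_le _ _).trans ?_
          rw [abs_mul, abs_of_nonneg (by linarith : 0 ≤ b)]
        have h2 : b * |J 0| ≤ 1 * K := by gcongr
        simp only [mul_zero, Real.exp_zero, one_mul, mul_one]
        linarith)
      (fun t ht => by
        have h1 : (J'' t + b * J' t) + a * (J' t + b * J t) = Real.exp (-t) * G t := by
          rw [← hODE t ht, hμ, ha, hb]; ring
        have h2 : Real.exp (a * t) * (Real.exp (-t) * G t) = Real.exp (-b * t) * G t := by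
          rw [← mul_assoc, ← Real.exp_add, hab]; ring_nf
        simp only [h1, h2]
        rw [abs_mul, abs_of_pos (Real.exp_pos _), mul_comm]
        have h3 : 2 * K ≤ 4 * K * b := by nlinarith
        exact mul_le_mul_of_nonneg_right ((hGb t ht).trans h3) (Real.exp_pos _).le)
    intro t ht
    have h1 : 0 ≤ 4 * K * Real.exp (-b * t) := by positivity
    have h2 := key t ht
    linarith
  have hJ : ∀ t ∈ Set.Ici (0:ℝ),
      |Real.exp (b * t) * J t| ≤ (K + 6 * K * t) * Real.exp (ν * t) := by
    -- The majorant has derivative at least `6K e^{νt}` because `ν ≥ 0`; the exact primitive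
    -- `6K e^{νt}/ν` would bring in a factor `1/ν`.
    have key := abs_le_of_abs_deriv_le
      (f := fun t => Real.exp (b * t) * J t)
      (f' := fun t => Real.exp (b * t) * (J' t + b * J t))
      (B := fun t => (K + 6 * K * t) * Real.exp (ν * t))
      (B' := fun t => 6 * K * Real.exp (ν * t) + (K + 6 * K * t) * (Real.exp (ν * t) * ν))
      (fun t ht => hasDerivWithinAt_exp_mul b (hJ' t ht))
      (fun t => by
        have h := (((hasDerivAt_id' t).const_mul (6 * K)).const_add K).mul
          (((hasDerivAt_id' t).const_mul ν).exp)
        exact h.congr_deriv (by ring))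
      (by simpa using hJ0)
      (fun t ht => by
        have ht' : 0 ≤ t := ht
        have h1 : Real.exp (b * t) * (J' t + b * J t)
            = Real.exp (ν * t) * (Real.exp (a * t) * (J' t + b * J t)) := by
          rw [← mul_assoc, ← Real.exp_add, ha, hb]; ring_nf
        simp only [h1]
        rw [abs_mul, abs_of_pos (Real.exp_pos _), mul_comm]
        have h2 := mul_le_mul_of_nonneg_right (hu t ht) (Real.exp_pos (ν * t)).le
        have h3 : 0 ≤ (K + 6 * K * t) * (Real.exp (ν * t) * ν) := by positivity
        linarith)
    exact key
  intro t ht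
  have ht' : 0 ≤ t := ht
  have h1 : |J t| ≤ (K + 6 * K * t) * Real.exp (-(1-ν)*t/2) := by
    have h := hJ t ht
    rw [abs_mul, abs_of_pos (Real.exp_pos _)] at h
    have h2 : Real.exp (ν * t) = Real.exp (b * t) * Real.exp (-(1-ν)*t/2) := by
      rw [← Real.exp_add, hb]; ring_nf
    rw [h2] at h
    refine le_of_mul_le_mul_left (h.trans_eq ?_) (Real.exp_pos (b * t))
    ring
  have h6 : 6 ≤ 6 / (1 - ν) := by
    rw [le_div_iff₀ (by linarith)]; linarith
  have h9 : 1 ≤ 9 / (1 - ν) ^ 2 := by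
    rw [le_div_iff₀ (by nlinarith)]; nlinarith
  calc |J t| ≤ (K + 6 * K * t) * Real.exp (-(1-ν)*t/2) := h1
    _ = 6 * K * t * Real.exp (-(1-ν)*t/2) + 1 * K * Real.exp (-(1-ν)*t/2) := by ring
    _ ≤ _ := by gcongr
end
end

section
/- Suppose μ = 0, assume that |G(t)| ≤ 2K for all t ≥ 0 and |J'(0)| ≤ K for some K ≥ 0, and assume J(t) → 0 as t → +∞. Then for every t ≥ 0 one has | J(t) + e^{-t} ∫₀^t G(ξ) dξ | ≤ 3 K e^{-t}. -/
/-!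
For `μ = 0` the equation reads `(eᵗ J')' = G`, hence `eᵗ J'(t) = J'(0) + ∫₀ᵗ G`. Consequently
`F(t) = J(t) + e⁻ᵗ ∫₀ᵗ G` satisfies `F'(t) = e⁻ᵗ (J'(0) + G(t))`, so `|F'(t)| ≤ 3K e⁻ᵗ`: the
function `F - 3K e⁻ᵗ` is nondecreasing and `F + 3K e⁻ᵗ` is nonincreasing. Both tend to `0` at
infinity, because `J → 0` and `|∫₀ᵗ G| ≤ 2K t`, so the first is `≤ 0` and the second `≥ 0`.
-/

theorem monotoneOn_Ici_of_hasDerivWithinAt {f f' : ℝ → ℝ}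
    (hf : ∀ t ∈ Set.Ici (0:ℝ), HasDerivWithinAt f (f' t) (Set.Ici 0) t)
    (h0 : ∀ t ∈ Set.Ici (0:ℝ), 0 ≤ f' t) : MonotoneOn f (Set.Ici 0) :=
  monotoneOn_of_hasDerivWithinAt_nonneg (convex_Ici 0)
    (fun t ht => (hf t ht).continuousWithinAt)
    (fun t ht => (hf t (interior_subset ht)).mono interior_subset)
    (fun t ht => h0 t (interior_subset ht))

theorem nonpos_of_monotoneOn_of_tendsto {f : ℝ → ℝ} (hf : MonotoneOn f (Set.Ici 0))
    (hlim : Filter.Tendsto f Filter.atTop (nhds 0)) {t : ℝ} (ht : t ∈ Set.Ici (0:ℝ)) :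
    f t ≤ 0 := by
  refine ge_of_tendsto hlim ?_
  filter_upwards [Filter.eventually_ge_atTop t] with s hs
  exact hf ht (le_trans (Set.mem_Ici.mp ht) hs) hs

/-- The one-sided fundamental theorem of calculus on `[0, ∞)`, endpoint included. -/
theorem hasDerivWithinAt_integral_Ici {G : ℝ → ℝ} (hG : ContinuousOn G (Set.Ici 0))
    {t : ℝ} (ht : t ∈ Set.Ici (0:ℝ)) :
    HasDerivWithinAt (fun s => ∫ ξ in (0:ℝ)..s, G ξ) (G t) (Set.Ici 0) t := by
  -- Extending `G` by the constant `G 0` on the left makes it continuous on all of `ℝ`.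
  have hc : Continuous (fun x => G (max x 0)) :=
    hG.comp_continuous (by fun_prop) (fun x => le_max_right x 0)
  have heq : ∀ s ∈ Set.Ici (0:ℝ),
      (∫ ξ in (0:ℝ)..s, G ξ) = ∫ ξ in (0:ℝ)..s, G (max ξ 0) := by
    intro s hs
    refine intervalIntegral.integral_congr fun x hx => ?_
    rw [Set.uIcc_of_le hs] at hx
    simp only [max_eq_left hx.1]
  have h := (hc.integral_hasStrictDerivAt 0 t).hasDerivAt.hasDerivWithinAt (s := Set.Ici 0)
  rw [max_eq_left (Set.mem_Ici.mp ht)] at h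
  exact h.congr heq (heq t ht)

/-- The case `μ = 0`: if `J(t) → 0` as `t → +∞`, then
`|J(t) + e^{-t}∫₀ᵗ G(ξ)dξ| ≤ 3Ke^{-t}`. -/
theorem zero_eigenvalue_case (μ : ℝ) (G J J' J'' : ℝ → ℝ)
    (hG : ContinuousOn G (Set.Ici 0))
    (hJ' : ∀ t ∈ Set.Ici (0:ℝ), HasDerivWithinAt J (J' t) (Set.Ici 0) t)
    (hJ'' : ∀ t ∈ Set.Ici (0:ℝ), HasDerivWithinAt J' (J'' t) (Set.Ici 0) t)
    (hODE : ∀ t ∈ Set.Ici (0:ℝ), J'' t + J' t + μ * J t = Real.exp (-t) * G t)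
    (hμ : μ = 0) (K : ℝ) (hK : 0 ≤ K)
    (hGb : ∀ t ∈ Set.Ici (0:ℝ), |G t| ≤ 2*K) (hJ'0 : |J' 0| ≤ K)
    (hlim : Filter.Tendsto J Filter.atTop (nhds 0)) :
    ∀ t ∈ Set.Ici (0:ℝ),
      |J t + Real.exp (-t) * ∫ ξ in (0:ℝ)..t, G ξ| ≤ 3 * K * Real.exp (-t) := by
  subst hμ
  set H : ℝ → ℝ := fun s => ∫ ξ in (0:ℝ)..s, G ξ with hHdef
  have hH : ∀ t ∈ Set.Ici (0:ℝ), HasDerivWithinAt H (G t) (Set.Ici 0) t :=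
    fun t ht => hasDerivWithinAt_integral_Ici hG ht
  have hH0 : H 0 = 0 := by simp [hHdef]
  have hee : ∀ t : ℝ, Real.exp t * Real.exp (-t) = 1 := fun t => by
    rw [← Real.exp_add]; simp
  have hE : ∀ t : ℝ, HasDerivWithinAt (fun s => Real.exp (-s)) (-Real.exp (-t)) (Set.Ici 0) t :=
    fun t => by simpa using ((hasDerivAt_neg t).exp).hasDerivWithinAt
  have hP : ∀ t ∈ Set.Ici (0:ℝ),
      HasDerivWithinAt (fun s => Real.exp s * J' s - H s) 0 (Set.Ici 0) t := by
    intro t ht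
    refine ((((Real.hasDerivAt_exp t).hasDerivWithinAt).mul (hJ'' t ht)).sub
      (hH t ht)).congr_deriv ?_
    linear_combination Real.exp t * hODE t ht + G t * hee t
  have hfirst : ∀ t ∈ Set.Ici (0:ℝ), J' t = Real.exp (-t) * (J' 0 + H t) := by
    intro t ht
    have h1 := monotoneOn_Ici_of_hasDerivWithinAt hP (fun _ _ => le_rfl)
      Set.self_mem_Ici ht ht
    have h2 := monotoneOn_Ici_of_hasDerivWithinAt (f' := fun _ => -0)
      (fun t ht => (hP t ht).neg) (fun _ _ => by simp) Set.self_mem_Ici ht ht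
    simp only [Pi.neg_apply, hH0, Real.exp_zero] at h1 h2
    have h3 : Real.exp t * J' t - H t = J' 0 := by linarith
    linear_combination Real.exp (-t) * h3 - J' t * hee t
  have hF : ∀ t ∈ Set.Ici (0:ℝ), HasDerivWithinAt (fun s => J s + Real.exp (-s) * H s)
      (Real.exp (-t) * (J' 0 + G t)) (Set.Ici 0) t := by
    intro t ht
    refine ((hJ' t ht).add ((hE t).mul (hH t ht))).congr_deriv ?_
    linear_combination hfirst t ht
  have hbound : ∀ t ∈ Set.Ici (0:ℝ), |J' 0 + G t| ≤ 3 * K := fun t ht =>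
    (abs_add_le _ _).trans (by linarith [hGb t ht])
  have hexp : Filter.Tendsto (fun s : ℝ => Real.exp (-s)) Filter.atTop (nhds 0) :=
    Real.tendsto_exp_neg_atTop_nhds_zero
  have hEH : Filter.Tendsto (fun s => Real.exp (-s) * H s) Filter.atTop (nhds 0) := by
    have hlin : Filter.Tendsto (fun s : ℝ => 2 * K * (s * Real.exp (-s)))
        Filter.atTop (nhds 0) := by
      simpa using (Real.tendsto_pow_mul_exp_neg_atTop_nhds_zero 1).const_mul (2 * K)
    refine squeeze_zero_norm' ?_ hlin
    filter_upwards [Filter.eventually_ge_atTop (0:ℝ)] with s hs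
    have hHs : ‖H s‖ ≤ 2 * K * |s - 0| :=
      intervalIntegral.norm_integral_le_of_norm_le_const fun x hx => by
        rw [Set.uIoc_of_le hs] at hx
        exact hGb x hx.1.le
    rw [sub_zero, abs_of_nonneg hs] at hHs
    rw [norm_mul, Real.norm_of_nonneg (Real.exp_pos _).le]
    nlinarith [mul_le_mul_of_nonneg_left hHs (Real.exp_pos (-s)).le]
  have hF0 : Filter.Tendsto (fun s => J s + Real.exp (-s) * H s) Filter.atTop (nhds 0) := by
    simpa using hlim.add hEH
  intro t ht
  have hup := nonpos_of_monotoneOn_of_tendsto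
    (f := fun s => (J s + Real.exp (-s) * H s) - 3 * K * Real.exp (-s))
    (monotoneOn_Ici_of_hasDerivWithinAt
      (fun t ht => (hF t ht).sub ((hE t).const_mul (3 * K)))
      (fun t ht => by
        nlinarith [mul_le_mul_of_nonneg_left (abs_le.mp (hbound t ht)).1 (Real.exp_pos (-t)).le]))
    (by simpa using hF0.sub (hexp.const_mul (3 * K))) ht
  have hlow := nonpos_of_monotoneOn_of_tendsto
    (f := fun s => -(J s + Real.exp (-s) * H s) - 3 * K * Real.exp (-s))
    (monotoneOn_Ici_of_hasDerivWithinAt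
      (fun t ht => (hF t ht).neg.sub ((hE t).const_mul (3 * K)))
      (fun t ht => by
        nlinarith [mul_le_mul_of_nonneg_left (abs_le.mp (hbound t ht)).2 (Real.exp_pos (-t)).le]))
    (by simpa using hF0.neg.sub (hexp.const_mul (3 * K))) ht
  rw [abs_le]
  constructor <;> linarith
end

section
/- Suppose μ = (1 − ν²)/4 for some ν > 1 (so μ < 0), assume G is bounded on [0,∞), and assume J is bounded on [0,∞). Then (1/ν) ∫₀^∞ e^{-(1+ν)ξ/2} G(ξ) dξ + ((1+ν)/(2ν)) J(0) + (1/ν) J'(0) = 0. -/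
open MeasureTheory

noncomputable section

/-!
Put `a = (ν + 1)/2` and `b = (ν - 1)/2 > 0`. Since `a - b = 1` and `a * b = -μ`, the operator
`D² + D + μ` factors as `(D - b)(D + a)`, so `F t = exp (-b t) * (J' t + a * J t)` satisfies
`F' t = exp (-a t) * G t`. This is integrable because `G` is bounded, hence `F` has a limit `L` and
`∫ exp (-a t) * G t = L - F 0`. The claim is therefore `L = 0`. Boundedness of `J` gives
`H t = exp (-b t) * J t → 0`, and `H' = F - (a + b) * H → L`; when a function and its derivative
both converge at infinity, the limit of the derivative is zero (`limit_deriv_eq_zero`).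
-/

open Filter Topology

/-- Follows from the mean value theorem on `[t, t + 1]`: the increments of `H` tend to `0`, whereas
they are values of `H'` at points going to infinity. -/
lemma limit_deriv_eq_zero {H H' : ℝ → ℝ} {m L : ℝ}
    (hd : ∀ t ∈ Set.Ioi (0:ℝ), HasDerivAt H (H' t) t)
    (hH : Tendsto H atTop (𝓝 m)) (hH' : Tendsto H' atTop (𝓝 L)) : L = 0 := by
  have hmvt : ∀ t : ℝ, ∃ c, t ≤ c ∧ (0 < t → H' c = H (t + 1) - H t) := by
    intro t
    by_cases ht : 0 < t
    · obtain ⟨c, hc, h⟩ := exists_hasDerivAt_eq_slope H H' (lt_add_one t)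
        (fun x hx => (hd x (lt_of_lt_of_le ht hx.1)).continuousAt.continuousWithinAt)
        (fun x hx => hd x (ht.trans hx.1))
      exact ⟨c, hc.1.le, fun _ => by simpa using h⟩
    · exact ⟨t, le_rfl, fun h => absurd h ht⟩
  choose c hc hval using hmvt
  have hctop : Tendsto c atTop atTop := tendsto_atTop_mono hc tendsto_id
  have hinc : Tendsto (fun t => H (t + 1) - H t) atTop (𝓝 0) := by
    simpa using (hH.comp (tendsto_atTop_add_const_right atTop (1:ℝ) tendsto_id)).sub hH
  refine tendsto_nhds_unique ((hH'.comp hctop).congr' ?_) hinc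
  filter_upwards [eventually_gt_atTop (0:ℝ)] with t ht using hval t ht

/-- The discrete series case `μ = (1 − ν²)/4` with `ν > 1`: if `G` and `J` are
bounded on `[0,∞)`, then the coefficient of the divergent mode vanishes. -/
theorem discrete_series_vanishing (μ : ℝ) (G J J' J'' : ℝ → ℝ)
    (hG : ContinuousOn G (Set.Ici 0))
    (hJ' : ∀ t ∈ Set.Ici (0:ℝ), HasDerivWithinAt J (J' t) (Set.Ici 0) t)
    (hJ'' : ∀ t ∈ Set.Ici (0:ℝ), HasDerivWithinAt J' (J'' t) (Set.Ici 0) t)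
    (hODE : ∀ t ∈ Set.Ici (0:ℝ), J'' t + J' t + μ * J t = Real.exp (-t) * G t)
    (ν : ℝ) (hν : 1 < ν) (hμ : μ = (1 - ν^2)/4)
    (hGb : ∃ C, ∀ t ∈ Set.Ici (0:ℝ), |G t| ≤ C)
    (hJb : ∃ C, ∀ t ∈ Set.Ici (0:ℝ), |J t| ≤ C) :
    (1/ν) * (∫ ξ in Set.Ici (0:ℝ), Real.exp (-(1+ν)*ξ/2) * G ξ)
      + ((1+ν)/(2*ν)) * J 0 + (1/ν) * J' 0 = 0 := by
  obtain ⟨C, hC⟩ := hGb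
  obtain ⟨K, hK⟩ := hJb
  obtain ⟨b, rfl⟩ : ∃ b, ν = 2 * b + 1 := ⟨(ν - 1) / 2, by ring⟩
  have hb : 0 < b := by linarith
  have hdJ : ∀ t ∈ Set.Ioi (0:ℝ), HasDerivAt J (J' t) t := fun t ht =>
    (hJ' t (Set.Ioi_subset_Ici_self ht)).hasDerivAt (Ici_mem_nhds ht)
  have hdJ' : ∀ t ∈ Set.Ioi (0:ℝ), HasDerivAt J' (J'' t) t := fun t ht =>
    (hJ'' t (Set.Ioi_subset_Ici_self ht)).hasDerivAt (Ici_mem_nhds ht)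
  have hdexp : ∀ t : ℝ, HasDerivAt (fun t => Real.exp (-b * t)) (Real.exp (-b * t) * -b) t :=
    fun t => by simpa using ((hasDerivAt_id t).const_mul (-b)).exp
  set g : ℝ → ℝ := fun ξ => Real.exp (-(1+(2*b+1))*ξ/2) * G ξ with hg
  set F : ℝ → ℝ := fun t => Real.exp (-b * t) * (J' t + (b + 1) * J t) with hF
  set H : ℝ → ℝ := fun t => Real.exp (-b * t) * J t with hH
  have hdF : ∀ t ∈ Set.Ioi (0:ℝ), HasDerivAt F (g t) t := by
    intro t ht
    refine ((hdexp t).mul ((hdJ' t ht).add ((hdJ t ht).const_mul (b + 1)))).congr_deriv ?_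
    have hexp : Real.exp (-(1+(2*b+1))*t/2) = Real.exp (-b * t) * Real.exp (-t) := by
      rw [← Real.exp_add]; congr 1; ring
    have hode := hODE t (Set.Ioi_subset_Ici_self ht)
    simp only [hg, hexp, Pi.add_apply]
    rw [mul_assoc (Real.exp (-b * t)) (Real.exp (-t)), ← hode, hμ]
    ring
  have hdH : ∀ t ∈ Set.Ioi (0:ℝ), HasDerivAt H (F t - (2 * b + 1) * H t) t := by
    intro t ht
    refine ((hdexp t).mul (hdJ t ht)).congr_deriv ?_
    simp only [hF, hH]
    ring
  have hcF : ContinuousWithinAt F (Set.Ici 0) 0 := by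
    have h0 : (0:ℝ) ∈ Set.Ici (0:ℝ) := Set.self_mem_Ici
    exact (hdexp 0).continuousAt.continuousWithinAt.mul ((hJ'' 0 h0).continuousWithinAt.add
      (continuousWithinAt_const.mul (hJ' 0 h0).continuousWithinAt))
  have hint : IntegrableOn g (Set.Ioi 0) := by
    have hdom : IntegrableOn (fun t => Real.exp (-(b + 1) * t) * C) (Set.Ioi 0) :=
      (exp_neg_integrableOn_Ioi 0 (by linarith)).mul_const C
    refine hdom.mono' ?_ ?_
    · refine ContinuousOn.aestronglyMeasurable ?_ measurableSet_Ioi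
      exact (by fun_prop : Continuous fun ξ : ℝ => Real.exp (-(1+(2*b+1))*ξ/2)).continuousOn.mul
        (hG.mono Set.Ioi_subset_Ici_self)
    · filter_upwards [ae_restrict_mem measurableSet_Ioi] with t ht
      have hexp : -(1+(2*b+1))*t/2 = -(b + 1) * t := by ring
      simp only [hg, hexp, norm_mul, Real.norm_eq_abs, Real.abs_exp]
      exact mul_le_mul_of_nonneg_left (hC t (Set.Ioi_subset_Ici_self ht)) (Real.exp_nonneg _)
  have hlimF := tendsto_limUnder_of_hasDerivAt_of_integrableOn_Ioi hdF hint
  have hFTC := integral_Ioi_of_hasDerivAt_of_tendsto hcF hdF hint hlimF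
  have hlimH : Tendsto H atTop (𝓝 0) := by
    have hexp : Tendsto (fun t : ℝ => Real.exp (-b * t)) atTop (𝓝 0) :=
      Real.tendsto_exp_atBot.comp (tendsto_id.const_mul_atTop_of_neg (by linarith))
    have hbd : Tendsto (fun t : ℝ => Real.exp (-b * t) * K) atTop (𝓝 0) := by
      simpa only [zero_mul] using hexp.mul_const K
    refine squeeze_zero_norm' ?_ hbd
    filter_upwards [eventually_ge_atTop (0:ℝ)] with t ht
    simp only [hH, norm_mul, Real.norm_eq_abs, Real.abs_exp]
    exact mul_le_mul_of_nonneg_left (hK t ht) (Real.exp_nonneg _)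
  have hL : limUnder atTop F = 0 :=
    limit_deriv_eq_zero hdH hlimH (by simpa using hlimF.sub (hlimH.const_mul (2 * b + 1)))
  rw [integral_Ici_eq_integral_Ioi, hFTC, hL]
  simp only [hF, mul_zero, Real.exp_zero]
  field_simp
  ring
end
end

section
/- Suppose μ = (1 − ν²)/4 for some ν ≥ 2 (so μ ≤ −3/4), assume, for some K ≥ 0, that |G(t)| ≤ 2K for all t ≥ 0, |J(0)| ≤ K, and |J'(0)| ≤ K, and assume J is bounded on [0,∞). Then for every t ≥ 0 one has |J(t)| ≤ 5 K e^{-t}. -/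
/-!
Since `μ ≤ -3/4 < 0`, the operator `L u = u'' + u' + μ u` obeys a maximum principle: `L u ≥ 0` is
impossible at an interior positive maximum, where `u' = 0` and `u'' ≤ 0`. On the half-line, for
functions that are bounded above, the maximum at infinity is excluded by subtracting `ε e^{t/2}`;
this preserves `L u ≥ 0` because `L e^{t/2} = (3/4 + μ) e^{t/2} ≤ 0`. This is
`nonpos_of_bddAbove_subsolution`.

As `L e^{-t} = μ e^{-t}`, the function `5K e^{-t}` is a barrier:
`L (±J - 5K e^{-t}) = e^{-t} (±G - 5Kμ) ≥ e^{-t} (-2K + 15K/4) ≥ 0`,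
and `±J - 5K e^{-t} ≤ 0` at `t = 0`, so the maximum principle gives the bound for both signs.
-/

open MeasureTheory

noncomputable section

/-- Second-order necessary condition for a local maximum. -/
theorem second_deriv_nonpos_of_isLocalMax {v v' : ℝ → ℝ} {a t : ℝ}
    (h1 : ∀ᶠ s in nhds t, HasDerivAt v (v' s) s) (h2 : HasDerivAt v' a t)
    (hm : IsLocalMax v t) : a ≤ 0 := by
  by_contra! ha
  have hd : deriv v =ᶠ[nhds t] v' := h1.mono fun s hs => hs.deriv
  have hdd : deriv (deriv v) t = a := by rw [hd.deriv_eq, h2.deriv]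
  have hmin : IsLocalMin v t :=
    isLocalMin_of_deriv_deriv_pos (by rw [hdd]; exact ha) hm.deriv_eq_zero
      h1.self_of_nhds.continuousAt
  -- A point that is both a local maximum and a local minimum makes `v` locally constant.
  have hc : v =ᶠ[nhds t] fun _ => v t := by
    filter_upwards [hm, hmin] with s hs hs' using le_antisymm hs hs'
  have hz : deriv (deriv v) t = 0 := by
    rw [hc.deriv.deriv_eq]
    simp
  linarith

/-- Maximum principle on `[0,∞)` for subsolutions of `u'' + u' + μ u = 0` that are bounded above.
The threshold `μ ≤ -3/4` is what makes `e^{t/2}` a supersolution. -/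
theorem nonpos_of_bddAbove_subsolution {μ C : ℝ} {u u' u'' : ℝ → ℝ} (hμ : μ ≤ -3 / 4)
    (h1 : ∀ t ∈ Set.Ici (0:ℝ), HasDerivWithinAt u (u' t) (Set.Ici 0) t)
    (h2 : ∀ t ∈ Set.Ici (0:ℝ), HasDerivWithinAt u' (u'' t) (Set.Ici 0) t)
    (hL : ∀ t ∈ Set.Ici (0:ℝ), 0 ≤ u'' t + u' t + μ * u t)
    (h0 : u 0 ≤ 0) (hC : ∀ t ∈ Set.Ici (0:ℝ), u t ≤ C) :
    ∀ t ∈ Set.Ici (0:ℝ), u t ≤ 0 := by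
  intro t₁ ht₁
  by_contra! hpos
  rw [Set.mem_Ici] at ht₁
  -- `ε` is small enough that subtracting `ε e^{t/2}` keeps the value at `t₁` positive.
  obtain ⟨ε, hε, hv₁⟩ : ∃ ε > 0, 0 < u t₁ - ε * Real.exp (t₁ / 2) := by
    refine ⟨u t₁ / 2 / Real.exp (t₁ / 2), by positivity, ?_⟩
    rw [div_mul_cancel₀ _ (Real.exp_pos _).ne']
    linarith
  have hE : ∀ s, HasDerivAt (fun s : ℝ => Real.exp (s / 2)) (Real.exp (s / 2) / 2) s := by
    intro s
    simpa [div_eq_mul_inv] using ((hasDerivAt_id s).div_const 2).exp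
  set v : ℝ → ℝ := fun s => u s - ε * Real.exp (s / 2) with hv
  set v' : ℝ → ℝ := fun s => u' s - ε * (Real.exp (s / 2) / 2) with hv'
  obtain ⟨T, hT₁, hT⟩ : ∃ T, t₁ ≤ T ∧ C ≤ ε * Real.exp (T / 2) := by
    refine ⟨max t₁ (2 * C / ε), le_max_left _ _, ?_⟩
    have h3 := Real.add_one_le_exp (max t₁ (2 * C / ε) / 2)
    have h4 : 2 * C / ε ≤ max t₁ (2 * C / ε) := le_max_right _ _
    rw [div_le_iff₀ hε] at h4
    nlinarith
  have hvT : v T ≤ 0 := by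
    have := hC T (ht₁.trans hT₁)
    simp only [hv]
    linarith
  have hv0 : v 0 ≤ 0 := by
    have := mul_pos hε (Real.exp_pos (0 / 2))
    simp only [hv]
    linarith
  have hcont : ContinuousOn v (Set.Icc 0 T) := by
    have hu : ContinuousOn u (Set.Icc 0 T) :=
      fun s hs => (h1 s hs.1).continuousWithinAt.mono fun x hx => hx.1
    exact hu.sub (by fun_prop)
  obtain ⟨t, ht, hmax⟩ := isCompact_Icc.exists_isMaxOn ⟨t₁, ht₁, hT₁⟩ hcont
  have hvt : 0 < v t := hv₁.trans_le (hmax ⟨ht₁, hT₁⟩)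
  have ht0 : 0 < t := lt_of_le_of_ne ht.1 (by rintro rfl; linarith)
  have htT : t < T := lt_of_le_of_ne ht.2 (by rintro rfl; linarith)
  have hloc : IsLocalMax v t := hmax.isLocalMax (Icc_mem_nhds ht0 htT)
  have hd : ∀ s, 0 < s → HasDerivAt v (v' s) s := fun s hs =>
    ((h1 s hs.le).hasDerivAt (Ici_mem_nhds hs)).sub ((hE s).const_mul ε)
  have hdd : HasDerivAt v' (u'' t - ε * (Real.exp (t / 2) / 2 / 2)) t :=
    ((h2 t ht0.le).hasDerivAt (Ici_mem_nhds ht0)).sub (((hE t).div_const 2).const_mul ε)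
  have hfirst : u' t - ε * (Real.exp (t / 2) / 2) = 0 := hloc.hasDerivAt_eq_zero (hd t ht0)
  have hsecond := second_deriv_nonpos_of_isLocalMax
    ((lt_mem_nhds ht0).mono fun s hs => hd s hs) hdd hloc
  have hLt := hL t ht0.le
  have hEpos := mul_pos hε (Real.exp_pos (t / 2))
  have hvt' : 0 < u t - ε * Real.exp (t / 2) := hvt
  nlinarith [mul_nonneg (sub_nonneg.2 hμ) hvt'.le, mul_nonneg (sub_nonneg.2 hμ) hEpos.le]

/-- The discrete series case `μ = (1 − ν²)/4` with `ν ≥ 2`: if `G`, `J(0)`,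
`J'(0)` obey the stated bounds and `J` is bounded on `[0,∞)`, then
`|J(t)| ≤ 5Ke^{-t}`. -/
theorem discrete_series_bound (μ : ℝ) (G J J' J'' : ℝ → ℝ)
    (hG : ContinuousOn G (Set.Ici 0))
    (hJ' : ∀ t ∈ Set.Ici (0:ℝ), HasDerivWithinAt J (J' t) (Set.Ici 0) t)
    (hJ'' : ∀ t ∈ Set.Ici (0:ℝ), HasDerivWithinAt J' (J'' t) (Set.Ici 0) t)
    (hODE : ∀ t ∈ Set.Ici (0:ℝ), J'' t + J' t + μ * J t = Real.exp (-t) * G t)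
    (ν : ℝ) (hν : 2 ≤ ν) (hμ : μ = (1 - ν^2)/4)
    (K : ℝ) (hK : 0 ≤ K)
    (hGb : ∀ t ∈ Set.Ici (0:ℝ), |G t| ≤ 2*K)
    (hJ0 : |J 0| ≤ K) (hJ'0 : |J' 0| ≤ K)
    (hJb : ∃ C, ∀ t ∈ Set.Ici (0:ℝ), |J t| ≤ C) :
    ∀ t ∈ Set.Ici (0:ℝ), |J t| ≤ 5 * K * Real.exp (-t) := by
  have hμ' : μ ≤ -3 / 4 := by nlinarith
  obtain ⟨C, hC⟩ := hJb
  have hE : ∀ s, HasDerivAt (fun s : ℝ => Real.exp (-s)) (-Real.exp (-s)) s := by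
    intro s
    simpa using (hasDerivAt_neg s).exp
  have hbarrier : ∀ σ : ℝ, |σ| = 1 → ∀ t ∈ Set.Ici (0:ℝ),
      σ * J t - 5 * K * Real.exp (-t) ≤ 0 := by
    intro σ hσ
    have habs : ∀ x B : ℝ, |x| ≤ B → -B ≤ σ * x ∧ σ * x ≤ B := fun x B hx =>
      abs_le.1 (by rwa [abs_mul, hσ, one_mul])
    refine nonpos_of_bddAbove_subsolution (C := C)
      (u' := fun t => σ * J' t - 5 * K * (-Real.exp (-t)))
      (u'' := fun t => σ * J'' t - 5 * K * (- -Real.exp (-t))) hμ' ?_ ?_ ?_ ?_ ?_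
    · exact fun t ht =>
        ((hJ' t ht).const_mul σ).sub ((hE t).hasDerivWithinAt.const_mul (5 * K))
    · exact fun t ht =>
        ((hJ'' t ht).const_mul σ).sub ((hE t).neg.hasDerivWithinAt.const_mul (5 * K))
    · intro t ht
      have hG' := (habs _ _ (hGb t ht)).1
      have hnn : 0 ≤ Real.exp (-t) * (σ * G t - 5 * K * μ) :=
        mul_nonneg (Real.exp_pos _).le (by nlinarith)
      have heq : σ * (J'' t + J' t + μ * J t) = σ * (Real.exp (-t) * G t) := by rw [hODE t ht]
      linarith
    · have := (habs _ _ hJ0).2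
      simp only [neg_zero, Real.exp_zero]
      linarith
    · intro t ht
      have := (habs _ _ (hC t ht)).2
      have : 0 ≤ 5 * K * Real.exp (-t) := by positivity
      linarith
  intro t ht
  have hp := hbarrier 1 (by simp) t ht
  have hn := hbarrier (-1) (by simp) t ht
  exact abs_le.2 ⟨by linarith, by linarith⟩
end
end

section
/- Let C₀ > 0, r ∈ (0, e^{-1}], and let F : [0,∞) → ℝ be a continuous function satisfying 0 ≤ F(ξ) ≤ C₀ · min{1, e^{ξ} r} for all ξ ≥ 0. Then ∫₀^∞ ξ e^{-ξ/2} F(ξ) dξ ≤ −8 C₀ √r · log r. -/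
/-!
Put `L = -log r ≥ 1`, so that `e^{-L/2} = √r`. The two terms of the minimum cross at `ξ = L`. Hence
the integrand is at most `C₀ r ξ e^{ξ/2}` on `(0, L]` and at most `C₀ ξ e^{-ξ/2}` on `(L, ∞)`. Both
bounds have elementary primitives, and the integrals are `C₀((2L-4)√r + 4r)` and `C₀(2L+4)√r`.
Their sum `C₀(4L√r + 4r)` is at most `8C₀L√r`, since `r ≤ √r` and `L ≥ 1`.
-/

open MeasureTheory

noncomputable section

lemma hasDerivAt_lower (x : ℝ) :
    HasDerivAt (fun ξ : ℝ => (2 * ξ - 4) * Real.exp (ξ / 2)) (x * Real.exp (x / 2)) x := by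
  have h1 : HasDerivAt (fun ξ : ℝ => 2 * ξ - 4) 2 x := by
    simpa using ((hasDerivAt_id x).const_mul 2).sub_const 4
  have h2 : HasDerivAt (fun ξ : ℝ => Real.exp (ξ / 2)) (Real.exp (x / 2) * (1 / 2)) x :=
    ((hasDerivAt_id x).div_const 2).exp
  exact (h1.mul h2).congr_deriv (by ring)

lemma hasDerivAt_upper (x : ℝ) :
    HasDerivAt (fun ξ : ℝ => -((2 * ξ + 4) * Real.exp (-ξ / 2))) (x * Real.exp (-x / 2)) x := by
  have h1 : HasDerivAt (fun ξ : ℝ => 2 * ξ + 4) 2 x := by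
    simpa using ((hasDerivAt_id x).const_mul 2).add_const 4
  have h2 : HasDerivAt (fun ξ : ℝ => Real.exp (-ξ / 2)) (Real.exp (-x / 2) * (-1 / 2)) x :=
    ((hasDerivAt_id x).neg.div_const 2).exp
  exact (h1.mul h2).neg.congr_deriv (by ring)

lemma tendsto_upper : Filter.Tendsto (fun ξ : ℝ => -((2 * ξ + 4) * Real.exp (-ξ / 2)))
    Filter.atTop (nhds 0) := by
  have hd : Filter.Tendsto (fun ξ : ℝ => ξ / 2) Filter.atTop Filter.atTop :=
    Filter.tendsto_id.atTop_div_const (by norm_num)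
  have h1 := (Real.tendsto_pow_mul_exp_neg_atTop_nhds_zero 1).comp hd
  have h0 := (Real.tendsto_pow_mul_exp_neg_atTop_nhds_zero 0).comp hd
  have h := ((h1.const_mul 4).add (h0.const_mul 4)).neg
  simp only [mul_zero, add_zero, neg_zero] at h
  refine h.congr fun x => ?_
  simp only [Function.comp, pow_one, pow_zero, neg_div]
  ring

/-- If `0 ≤ F(ξ) ≤ C₀·min{1, e^ξ r}` on `[0,∞)`, with `0 < r ≤ e^{-1}`, then
`∫₀^∞ ξ e^{-ξ/2}F(ξ)dξ ≤ −8C₀√r·log r`. -/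
theorem holder_integral_bound_quarter (C₀ r : ℝ) (hC₀ : 0 < C₀)
    (hr : r ∈ Set.Ioc (0:ℝ) (Real.exp (-1)))
    (F : ℝ → ℝ) (hF : ContinuousOn F (Set.Ici 0))
    (hFb : ∀ ξ ∈ Set.Ici (0:ℝ), 0 ≤ F ξ ∧ F ξ ≤ C₀ * min 1 (Real.exp ξ * r)) :
    ∫ ξ in Set.Ici (0:ℝ), ξ * Real.exp (-ξ/2) * F ξ ≤ -8 * C₀ * Real.sqrt r * Real.log r := by
  obtain ⟨hr0, hr1⟩ := hr
  obtain ⟨L, hL⟩ : ∃ L, L = -Real.log r := ⟨_, rfl⟩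
  have hL1 : 1 ≤ L := by
    have := (Real.log_le_iff_le_exp hr0).2 hr1
    linarith
  have hs0 : 0 < Real.sqrt r := Real.sqrt_pos.2 hr0
  have hss : Real.sqrt r * Real.sqrt r = r := Real.mul_self_sqrt hr0.le
  have hs1 : Real.sqrt r ≤ 1 := by
    rw [Real.sqrt_le_iff]
    refine ⟨zero_le_one, ?_⟩
    rw [one_pow]
    exact hr1.trans (Real.exp_le_one_iff.2 (by norm_num))
  have hexp : Real.exp (-L / 2) = Real.sqrt r := by
    rw [hL, neg_neg, ← Real.log_sqrt hr0.le, Real.exp_log hs0]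
  have hexp' : Real.sqrt r * Real.exp (L / 2) = 1 := by
    rw [← hexp, ← Real.exp_add]
    simp [neg_div]
  have I1 : ∫ ξ in Set.Ioc 0 L, ξ * Real.exp (ξ / 2) = (2 * L - 4) * Real.exp (L / 2) + 4 := by
    rw [← intervalIntegral.integral_of_le (by linarith),
      intervalIntegral.integral_eq_sub_of_hasDerivAt (fun x _ => hasDerivAt_lower x)
        ((by fun_prop : Continuous fun ξ : ℝ => ξ * Real.exp (ξ / 2)).intervalIntegrable _ _)]
    simp
  have hpos : ∀ x ∈ Set.Ioi L, 0 ≤ x * Real.exp (-x / 2) := fun x hx =>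
    mul_nonneg (by linarith [Set.mem_Ioi.1 hx]) (Real.exp_pos _).le
  have I2 : ∫ ξ in Set.Ioi L, ξ * Real.exp (-ξ / 2) = (2 * L + 4) * Real.sqrt r := by
    rw [integral_Ioi_of_hasDerivAt_of_nonneg' (fun x _ => hasDerivAt_upper x) hpos tendsto_upper,
      hexp]
    ring
  have J1 : IntegrableOn (fun ξ => C₀ * r * (ξ * Real.exp (ξ / 2))) (Set.Ioc 0 L) :=
    (by fun_prop : Continuous fun ξ : ℝ => C₀ * r * (ξ * Real.exp (ξ / 2))).integrableOn_Ioc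
  have J2 : IntegrableOn (fun ξ => C₀ * (ξ * Real.exp (-ξ / 2))) (Set.Ioi L) :=
    (integrableOn_Ioi_deriv_of_nonneg' (fun x _ => hasDerivAt_upper x) hpos
      tendsto_upper).const_mul C₀
  let g : ℝ → ℝ := fun ξ =>
    if ξ ≤ L then C₀ * r * (ξ * Real.exp (ξ / 2)) else C₀ * (ξ * Real.exp (-ξ / 2))
  have e1 : Set.EqOn (fun ξ => C₀ * r * (ξ * Real.exp (ξ / 2))) g (Set.Ioc 0 L) :=
    fun x hx => (if_pos hx.2).symm
  have e2 : Set.EqOn (fun ξ => C₀ * (ξ * Real.exp (-ξ / 2))) g (Set.Ioi L) :=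
    fun x hx => (if_neg (not_le.2 hx)).symm
  have K1 := J1.congr_fun e1 measurableSet_Ioc
  have K2 := J2.congr_fun e2 measurableSet_Ioi
  have hU : Set.Ioc 0 L ∪ Set.Ioi L = Set.Ioi 0 := Set.Ioc_union_Ioi_eq_Ioi (by linarith)
  have Kg : IntegrableOn g (Set.Ioi 0) := hU ▸ K1.union K2
  have Ig : ∫ ξ in Set.Ioi 0, g ξ
      = C₀ * r * ((2 * L - 4) * Real.exp (L / 2) + 4) + C₀ * ((2 * L + 4) * Real.sqrt r) := by
    rw [← hU, setIntegral_union (Set.Ioc_disjoint_Ioi le_rfl) measurableSet_Ioi K1 K2,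
      ← setIntegral_congr_fun measurableSet_Ioc e1, ← setIntegral_congr_fun measurableSet_Ioi e2,
      integral_const_mul, integral_const_mul, I1, I2]
  have hle : ∫ ξ in Set.Ioi (0:ℝ), ξ * Real.exp (-ξ/2) * F ξ ≤ ∫ ξ in Set.Ioi 0, g ξ := by
    refine integral_mono_of_nonneg ?_ Kg ?_
    · filter_upwards [ae_restrict_mem measurableSet_Ioi] with x hx
      have hx0 : 0 ≤ x := (Set.mem_Ioi.1 hx).le
      exact mul_nonneg (mul_nonneg hx0 (Real.exp_pos _).le) (hFb x hx0).1
    · filter_upwards [ae_restrict_mem measurableSet_Ioi] with x hx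
      have hx0 : 0 ≤ x := (Set.mem_Ioi.1 hx).le
      have hw : 0 ≤ x * Real.exp (-x / 2) := mul_nonneg hx0 (Real.exp_pos _).le
      have hFx := (hFb x hx0).2
      by_cases h : x ≤ L
      · have hb : F x ≤ C₀ * (Real.exp x * r) :=
          hFx.trans (mul_le_mul_of_nonneg_left (min_le_right _ _) hC₀.le)
        have he : Real.exp (-x / 2) * Real.exp x = Real.exp (x / 2) := by
          rw [← Real.exp_add]
          ring_nf
        simp only [g, if_pos h]
        calc x * Real.exp (-x / 2) * F x
            ≤ x * Real.exp (-x / 2) * (C₀ * (Real.exp x * r)) := mul_le_mul_of_nonneg_left hb hw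
          _ = C₀ * r * (x * (Real.exp (-x / 2) * Real.exp x)) := by ring
          _ = _ := by rw [he]
      · have hb : F x ≤ C₀ * 1 :=
          hFx.trans (mul_le_mul_of_nonneg_left (min_le_left _ _) hC₀.le)
        simp only [g, if_neg h]
        calc x * Real.exp (-x / 2) * F x
            ≤ x * Real.exp (-x / 2) * (C₀ * 1) := mul_le_mul_of_nonneg_left hb hw
          _ = _ := by ring
  rw [integral_Ici_eq_integral_Ioi]
  refine hle.trans ?_
  have hrE : r * Real.exp (L / 2) = Real.sqrt r := by
    calc r * Real.exp (L / 2) = Real.sqrt r * (Real.sqrt r * Real.exp (L / 2)) := by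
          rw [← mul_assoc, hss]
      _ = _ := by rw [hexp', mul_one]
  have hlog : Real.log r = -L := by rw [hL, neg_neg]
  have hrs : r ≤ Real.sqrt r * L := by
    calc r = Real.sqrt r * Real.sqrt r := hss.symm
      _ ≤ Real.sqrt r * L := mul_le_mul_of_nonneg_left (hs1.trans hL1) hs0.le
  rw [Ig, hlog]
  calc C₀ * r * ((2 * L - 4) * Real.exp (L / 2) + 4) + C₀ * ((2 * L + 4) * Real.sqrt r)
      = C₀ * ((2 * L - 4) * (r * Real.exp (L / 2)) + 4 * r + (2 * L + 4) * Real.sqrt r) := by ring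
    _ = C₀ * (4 * (Real.sqrt r * L) + 4 * r) := by rw [hrE]; ring
    _ ≤ C₀ * (8 * (Real.sqrt r * L)) := mul_le_mul_of_nonneg_left (by linarith) hC₀.le
    _ = _ := by ring
end
end

section
/- Suppose μ = 1/4, suppose G is continuously differentiable with G and G' bounded on [0,∞), and for a bounded continuous function H : [0,∞) → ℝ and real numbers j₀, j₁ define D⁺[H, j₀, j₁] := −∫₀^∞ ξ e^{-ξ/2} H(ξ) dξ + j₀ and D⁻[H, j₀, j₁] := ∫₀^∞ e^{-ξ/2} H(ξ) dξ + (1/2) j₀ + j₁. Then (noting J''(0) = −J'(0) − (1/4) J(0) + G(0)) one has D⁺[G − G', −J'(0), −J''(0)] = (1/2) D⁺[G, J(0), J'(0)] − D⁻[G, J(0), J'(0)] and D⁻[G − G', −J'(0), −J''(0)] = (1/2) D⁻[G, J(0), J'(0)]. -/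
/-!
Write `w ξ = e^{-ξ/2}`. Since `w G` and `ξ w G` vanish at infinity, integrating their derivatives
over `[0, ∞)` gives `∫ w G' = (1/2) ∫ w G - G 0` and `∫ ξ w G' = (1/2) ∫ ξ w G - ∫ w G`
(`integral_mul_deriv_of_bdd`). Together with the ODE at `t = 0`, which eliminates `J'' 0`, both
identities become linear in the two integrals of `G` and the initial data.
-/

open MeasureTheory

noncomputable section

/-- `D⁺[H, j₀, j₁]` in the case `μ = 1/4`. -/
def DplusQuarter (H : ℝ → ℝ) (j₀ j₁ : ℝ) : ℝ :=
  -(∫ ξ in Set.Ici (0:ℝ), ξ * Real.exp (-ξ/2) * H ξ) + j₀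

/-- `D⁻[H, j₀, j₁]` in the case `μ = 1/4`. -/
def DminusQuarter (H : ℝ → ℝ) (j₀ j₁ : ℝ) : ℝ :=
  (∫ ξ in Set.Ici (0:ℝ), Real.exp (-ξ/2) * H ξ) + (1/2) * j₀ + j₁

lemma integrableOn_mul_of_bdd {u f : ℝ → ℝ} (hu : IntegrableOn u (Set.Ici 0))
    (hf : ContinuousOn f (Set.Ici 0)) (hb : ∃ C, ∀ t ∈ Set.Ici (0:ℝ), |f t| ≤ C) :
    IntegrableOn (fun ξ => u ξ * f ξ) (Set.Ici 0) := by
  obtain ⟨C, hC⟩ := hb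
  refine Integrable.mul_bdd (c := C) hu (hf.aestronglyMeasurable measurableSet_Ici) ?_
  filter_upwards [ae_restrict_mem measurableSet_Ici] with x hx
  simpa using hC x hx

/-- Integration by parts on `[0, ∞)`. Integrability of both `u f` and its derivative forces
`u f` to vanish at infinity, so only the boundary term at `0` survives. -/
lemma integral_mul_deriv_of_bdd {u u' f f' : ℝ → ℝ}
    (hu : ∀ x, HasDerivAt u (u' x) x)
    (hf : ∀ t ∈ Set.Ici (0:ℝ), HasDerivWithinAt f (f' t) (Set.Ici 0) t)
    (hui : IntegrableOn u (Set.Ici 0)) (hu'i : IntegrableOn u' (Set.Ici 0))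
    (hf' : ContinuousOn f' (Set.Ici 0))
    (hb : ∃ C, ∀ t ∈ Set.Ici (0:ℝ), |f t| ≤ C)
    (hb' : ∃ C, ∀ t ∈ Set.Ici (0:ℝ), |f' t| ≤ C) :
    ∫ ξ in Set.Ici (0:ℝ), u ξ * f' ξ
      = -(u 0 * f 0) - ∫ ξ in Set.Ici (0:ℝ), u' ξ * f ξ := by
  have hfc : ContinuousOn f (Set.Ici 0) := fun t ht => (hf t ht).continuousWithinAt
  have h1 := integrableOn_mul_of_bdd hui hfc hb
  have h2 := integrableOn_mul_of_bdd hu'i hfc hb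
  have h3 := integrableOn_mul_of_bdd hui hf' hb'
  have hd : ∀ x ∈ Set.Ioi (0:ℝ),
      HasDerivAt (fun ξ => u ξ * f ξ) (u' x * f x + u x * f' x) x := fun x hx =>
    (hu x).mul ((hf x (Set.Ioi_subset_Ici_self hx)).hasDerivAt (Ici_mem_nhds hx))
  have h4 : IntegrableOn (fun x => u' x * f x + u x * f' x) (Set.Ioi 0) :=
    (h2.add h3).mono_set Set.Ioi_subset_Ici_self
  have hlim := tendsto_zero_of_hasDerivAt_of_integrableOn_Ioi hd h4
    (h1.mono_set Set.Ioi_subset_Ici_self)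
  have key := integral_Ioi_of_hasDerivAt_of_tendsto
    ((hu 0).continuousAt.continuousWithinAt.mul (hfc 0 Set.self_mem_Ici)) hd h4 hlim
  rw [← integral_Ici_eq_integral_Ioi, integral_add h2 h3, Pi.mul_apply] at key
  linarith

lemma integrableOn_exp_neg_half :
    IntegrableOn (fun ξ : ℝ => Real.exp (-ξ/2)) (Set.Ici 0) := by
  rw [integrableOn_Ici_iff_integrableOn_Ioi]
  refine (integrableOn_exp_mul_Ioi (a := -1/2) (by norm_num) 0).congr_fun
    (fun x _ => ?_) measurableSet_Ioi
  ring_nf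

lemma integrableOn_mul_exp_neg_half :
    IntegrableOn (fun ξ : ℝ => ξ * Real.exp (-ξ/2)) (Set.Ici 0) := by
  rw [integrableOn_Ici_iff_integrableOn_Ioi]
  refine (integrableOn_rpow_mul_exp_neg_mul_rpow (p := 1) (s := 1) (b := 1/2) (by norm_num)
    one_pos (by norm_num)).congr_fun (fun x _ => ?_) measurableSet_Ioi
  simp only [Real.rpow_one]
  ring_nf

/-- Action of the geodesic flow on the coefficients in the case `μ = 1/4`. -/
theorem geodesic_action_quarter (μ : ℝ) (G J J' J'' : ℝ → ℝ)
    (hG : ContinuousOn G (Set.Ici 0))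
    (hJ' : ∀ t ∈ Set.Ici (0:ℝ), HasDerivWithinAt J (J' t) (Set.Ici 0) t)
    (hJ'' : ∀ t ∈ Set.Ici (0:ℝ), HasDerivWithinAt J' (J'' t) (Set.Ici 0) t)
    (hODE : ∀ t ∈ Set.Ici (0:ℝ), J'' t + J' t + μ * J t = Real.exp (-t) * G t)
    (hμ : μ = 1/4) (G' : ℝ → ℝ)
    (hGdiff : ∀ t ∈ Set.Ici (0:ℝ), HasDerivWithinAt G (G' t) (Set.Ici 0) t)
    (hG' : ContinuousOn G' (Set.Ici 0))
    (hGb : ∃ C, ∀ t ∈ Set.Ici (0:ℝ), |G t| ≤ C)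
    (hG'b : ∃ C, ∀ t ∈ Set.Ici (0:ℝ), |G' t| ≤ C) :
    DplusQuarter (fun ξ => G ξ - G' ξ) (-J' 0) (-J'' 0)
        = (1/2) * DplusQuarter G (J 0) (J' 0) - DminusQuarter G (J 0) (J' 0) ∧
    DminusQuarter (fun ξ => G ξ - G' ξ) (-J' 0) (-J'' 0)
        = (1/2) * DminusQuarter G (J 0) (J' 0) := by
  have hw : ∀ x : ℝ, HasDerivAt (fun ξ : ℝ => Real.exp (-ξ/2)) (-(1/2) * Real.exp (-x/2)) x := by
    intro x
    exact ((hasDerivAt_neg' x).div_const 2).exp.congr_deriv (by ring)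
  have hxw : ∀ x : ℝ, HasDerivAt (fun ξ : ℝ => ξ * Real.exp (-ξ/2))
      (Real.exp (-x/2) + -(1/2) * (x * Real.exp (-x/2))) x := by
    intro x
    exact ((hasDerivAt_id' x).mul (hw x)).congr_deriv (by ring)
  have iw := integrableOn_exp_neg_half
  have ixw := integrableOn_mul_exp_neg_half
  have A := integrableOn_mul_of_bdd iw hG hGb
  have A' := integrableOn_mul_of_bdd iw hG' hG'b
  have B := integrableOn_mul_of_bdd ixw hG hGb
  have B' := integrableOn_mul_of_bdd ixw hG' hG'b
  have eA := integral_mul_deriv_of_bdd hw hGdiff iw (iw.const_mul _) hG' hGb hG'b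
  have eB := integral_mul_deriv_of_bdd hxw hGdiff ixw (iw.add (ixw.const_mul _)) hG' hGb hG'b
  simp only [add_mul, mul_assoc (-(1/2) : ℝ)] at eA eB
  rw [integral_const_mul] at eA
  rw [integral_add A (B.const_mul _), integral_const_mul] at eB
  have h0 := hODE 0 Set.self_mem_Ici
  simp only [neg_zero, zero_div, Real.exp_zero, one_mul, zero_mul] at h0 eA eB
  subst hμ
  unfold DplusQuarter DminusQuarter
  simp only [mul_sub]
  rw [integral_sub A A', integral_sub B B']
  constructor <;> linarith
end
end

section
/- Suppose μ > 1/4 and set ν_I := √(4μ − 1). Suppose G is continuously differentiable with G and G' bounded on [0,∞), and for a bounded continuous function H : [0,∞) → ℝ and real numbers j₀, j₁ define D⁺[H, j₀, j₁] := −(2/ν_I) ∫₀^∞ e^{-ξ/2} sin(ν_I ξ/2) H(ξ) dξ + j₀ and D⁻[H, j₀, j₁] := (2/ν_I) ∫₀^∞ e^{-ξ/2} cos(ν_I ξ/2) H(ξ) dξ + (1/ν_I) j₀ + (2/ν_I) j₁. Then (noting J''(0) = −J'(0) − μ J(0) + G(0)) one has D⁺[G − G', −J'(0), −J''(0)] =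 (1/2) D⁺[G, J(0), J'(0)] − (ν_I/2) D⁻[G, J(0), J'(0)] and D⁻[G − G', −J'(0), −J''(0)] = (ν_I/2) D⁺[G, J(0), J'(0)] + (1/2) D⁻[G, J(0), J'(0)]. -/
/-!
Integration by parts against the damped weights `e^{-ξ/2} sin (ν_I ξ/2)` and
`e^{-ξ/2} cos (ν_I ξ/2)`, which decay at infinity while `G` stays bounded, rewrites the integrals
of `G'` as combinations of those of `G` (`integral_exp_mul_deriv`), the boundary term being `0`
for the sine and `-G 0` for the cosine. The boundary term cancels against the `G 0` that enters
through the ODE at `t = 0`, and the relation `ν_I ^ 2 = 4 μ - 1` matches the coefficients of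
`J 0`.
-/

open MeasureTheory

noncomputable section

/-- `D⁺[H, j₀, j₁]` in the principal series case. -/
def DplusPrincipal (νI : ℝ) (H : ℝ → ℝ) (j₀ j₁ : ℝ) : ℝ :=
  -(2/νI) * (∫ ξ in Set.Ici (0:ℝ), Real.exp (-ξ/2) * Real.sin (νI * ξ / 2) * H ξ) + j₀

/-- `D⁻[H, j₀, j₁]` in the principal series case. -/
def DminusPrincipal (νI : ℝ) (H : ℝ → ℝ) (j₀ j₁ : ℝ) : ℝ :=
  (2/νI) * (∫ ξ in Set.Ici (0:ℝ), Real.exp (-ξ/2) * Real.cos (νI * ξ / 2) * H ξ)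
    + (1/νI) * j₀ + (2/νI) * j₁

theorem integrableOn_exp_mul_bounded {w H : ℝ → ℝ} (hw : Continuous w) (hwb : ∀ x, |w x| ≤ 1)
    (hH : ContinuousOn H (Set.Ici 0)) (hHb : ∃ C, ∀ t ∈ Set.Ici (0:ℝ), |H t| ≤ C) :
    IntegrableOn (fun ξ => Real.exp (-ξ/2) * w ξ * H ξ) (Set.Ioi 0) := by
  obtain ⟨C, hC⟩ := hHb
  have hexp : IntegrableOn (fun ξ : ℝ => C * Real.exp (-(1/2) * ξ)) (Set.Ioi 0) :=
    (exp_neg_integrableOn_Ioi 0 (by norm_num : (0:ℝ) < 1/2)).const_mul C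
  refine Integrable.mono' hexp ?_ ?_
  · refine ContinuousOn.aestronglyMeasurable ?_ measurableSet_Ioi
    exact ContinuousOn.mul (by fun_prop) (hH.mono Set.Ioi_subset_Ici_self)
  · refine (ae_restrict_mem measurableSet_Ioi).mono fun x hx => ?_
    have hx' : |H x| ≤ C := hC x (Set.Ioi_subset_Ici_self hx)
    rw [Real.norm_eq_abs, abs_mul, abs_mul, Real.abs_exp,
      show -(1/2) * x = -x/2 by ring]
    have h1 : |w x| * |H x| ≤ 1 * C :=
      mul_le_mul (hwb x) hx' (abs_nonneg _) zero_le_one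
    have h2 := mul_le_mul_of_nonneg_left h1 (Real.exp_pos (-x/2)).le
    linarith

/-- Integration by parts on the half-line against a damped bounded weight `e^{-ξ/2} w ξ`:
the boundary term at infinity vanishes because `w` and `G` are bounded. -/
theorem integral_exp_mul_deriv {w v G G' : ℝ → ℝ} {a : ℝ}
    (hw : ∀ x, HasDerivAt w (a * v x) x) (hv : Continuous v)
    (hwb : ∀ x, |w x| ≤ 1) (hvb : ∀ x, |v x| ≤ 1)
    (hGdiff : ∀ t ∈ Set.Ici (0:ℝ), HasDerivWithinAt G (G' t) (Set.Ici 0) t)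
    (hG' : ContinuousOn G' (Set.Ici 0))
    (hGb : ∃ C, ∀ t ∈ Set.Ici (0:ℝ), |G t| ≤ C)
    (hG'b : ∃ C, ∀ t ∈ Set.Ici (0:ℝ), |G' t| ≤ C) :
    ∫ ξ in Set.Ioi (0:ℝ), Real.exp (-ξ/2) * w ξ * G' ξ
      = -(w 0 * G 0) + (1/2) * (∫ ξ in Set.Ioi (0:ℝ), Real.exp (-ξ/2) * w ξ * G ξ)
        - a * ∫ ξ in Set.Ioi (0:ℝ), Real.exp (-ξ/2) * v ξ * G ξ := by
  have hG : ContinuousOn G (Set.Ici 0) := fun t ht => (hGdiff t ht).continuousWithinAt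
  have hwc : Continuous w := continuous_iff_continuousAt.2 fun x => (hw x).continuousAt
  have i1 := integrableOn_exp_mul_bounded hwc hwb hG' hG'b
  have i2 := (integrableOn_exp_mul_bounded hwc hwb hG hGb).const_mul (1/2)
  have i3 := (integrableOn_exp_mul_bounded hv hvb hG hGb).const_mul a
  have i12 : Integrable (fun ξ => Real.exp (-ξ/2) * w ξ * G' ξ
      - (1/2) * (Real.exp (-ξ/2) * w ξ * G ξ)) (volume.restrict (Set.Ioi 0)) := i1.sub i2
  have hderiv : ∀ x ∈ Set.Ioi (0:ℝ), HasDerivAt (fun ξ => Real.exp (-ξ/2) * w ξ * G ξ)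
      (Real.exp (-x/2) * w x * G' x - (1/2) * (Real.exp (-x/2) * w x * G x)
        + a * (Real.exp (-x/2) * v x * G x)) x := by
    intro x hx
    have hg : HasDerivAt G (G' x) x :=
      (hGdiff x (Set.Ioi_subset_Ici_self hx)).hasDerivAt (Ici_mem_nhds hx)
    have he : HasDerivAt (fun ξ : ℝ => Real.exp (-ξ/2)) (Real.exp (-x/2) * (-1/2)) x :=
      ((hasDerivAt_id x).neg.div_const 2).exp
    refine ((he.mul (hw x)).mul hg).congr_deriv ?_
    simp only [Pi.mul_apply]
    ring
  have hlim : Filter.Tendsto (fun ξ => Real.exp (-ξ/2) * w ξ * G ξ) Filter.atTop (nhds 0) := by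
    obtain ⟨C, hC⟩ := hGb
    have hexp : Filter.Tendsto (fun ξ : ℝ => Real.exp (-ξ/2) * C) Filter.atTop (nhds 0) := by
      have h := (Real.tendsto_exp_neg_atTop_nhds_zero.comp
        (Filter.tendsto_id.atTop_div_const (by norm_num : (0:ℝ) < 2))).mul_const C
      rw [zero_mul] at h
      refine h.congr fun x => ?_
      simp [neg_div]
    refine squeeze_zero_norm' ?_ hexp
    filter_upwards [Filter.eventually_ge_atTop (0:ℝ)] with x hx
    rw [Real.norm_eq_abs, abs_mul, abs_mul, Real.abs_exp, mul_assoc]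
    have h1 : |w x| * |G x| ≤ 1 * C := mul_le_mul (hwb x) (hC x hx) (abs_nonneg _) zero_le_one
    rw [one_mul] at h1
    exact mul_le_mul_of_nonneg_left h1 (Real.exp_pos _).le
  have hcont : ContinuousWithinAt (fun ξ => Real.exp (-ξ/2) * w ξ * G ξ) (Set.Ici 0) 0 :=
    (ContinuousOn.mul (by fun_prop) hG) 0 Set.self_mem_Ici
  have key := integral_Ioi_of_hasDerivAt_of_tendsto hcont hderiv (i12.add i3) hlim
  rw [integral_add i12 i3, integral_sub i1 i2, integral_const_mul,
    integral_const_mul] at key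
  simp only [neg_zero, zero_div, Real.exp_zero, one_mul] at key
  linarith

/-- Action of the geodesic flow on the coefficients, principal series case
`μ > 1/4`, `ν_I = √(4μ − 1)`. -/
theorem geodesic_action_principal (μ : ℝ) (G J J' J'' : ℝ → ℝ)
    (hG : ContinuousOn G (Set.Ici 0))
    (hJ' : ∀ t ∈ Set.Ici (0:ℝ), HasDerivWithinAt J (J' t) (Set.Ici 0) t)
    (hJ'' : ∀ t ∈ Set.Ici (0:ℝ), HasDerivWithinAt J' (J'' t) (Set.Ici 0) t)
    (hODE : ∀ t ∈ Set.Ici (0:ℝ), J'' t + J' t + μ * J t = Real.exp (-t) * G t)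
    (hμ : 1/4 < μ) (νI : ℝ) (hνI : νI = Real.sqrt (4*μ - 1))
    (G' : ℝ → ℝ)
    (hGdiff : ∀ t ∈ Set.Ici (0:ℝ), HasDerivWithinAt G (G' t) (Set.Ici 0) t)
    (hG' : ContinuousOn G' (Set.Ici 0))
    (hGb : ∃ C, ∀ t ∈ Set.Ici (0:ℝ), |G t| ≤ C)
    (hG'b : ∃ C, ∀ t ∈ Set.Ici (0:ℝ), |G' t| ≤ C) :
    DplusPrincipal νI (fun ξ => G ξ - G' ξ) (-J' 0) (-J'' 0)
        = (1/2) * DplusPrincipal νI G (J 0) (J' 0)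
          - (νI/2) * DminusPrincipal νI G (J 0) (J' 0) ∧
    DminusPrincipal νI (fun ξ => G ξ - G' ξ) (-J' 0) (-J'' 0)
        = (νI/2) * DplusPrincipal νI G (J 0) (J' 0)
          + (1/2) * DminusPrincipal νI G (J 0) (J' 0) := by
  have hν : 0 < νI := hνI ▸ Real.sqrt_pos.2 (by linarith)
  have hν2 : νI ^ 2 = 4 * μ - 1 := hνI ▸ Real.sq_sqrt (by linarith)
  have hlin : ∀ x : ℝ, HasDerivAt (fun ξ : ℝ => νI * ξ / 2) (νI / 2) x := fun x => by
    simpa using ((hasDerivAt_id x).const_mul νI).div_const 2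
  have hsd : ∀ x : ℝ, HasDerivAt (fun ξ => Real.sin (νI * ξ / 2))
      (νI / 2 * Real.cos (νI * x / 2)) x := fun x => by
    simpa [mul_comm] using (hlin x).sin
  have hcd : ∀ x : ℝ, HasDerivAt (fun ξ => Real.cos (νI * ξ / 2))
      (-(νI / 2) * Real.sin (νI * x / 2)) x := fun x => by
    convert (hlin x).cos using 1
    ring
  have hsc : Continuous fun ξ : ℝ => Real.sin (νI * ξ / 2) := by fun_prop
  have hcc : Continuous fun ξ : ℝ => Real.cos (νI * ξ / 2) := by fun_prop
  have hsb : ∀ x : ℝ, |Real.sin (νI * x / 2)| ≤ 1 := fun x => Real.abs_sin_le_one _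
  have hcb : ∀ x : ℝ, |Real.cos (νI * x / 2)| ≤ 1 := fun x => Real.abs_cos_le_one _
  have hS := integral_exp_mul_deriv hsd hcc hsb hcb hGdiff hG' hGb hG'b
  have hC := integral_exp_mul_deriv hcd hsc hcb hsb hGdiff hG' hGb hG'b
  have hode := hODE 0 Set.self_mem_Ici
  simp only [mul_zero, zero_div, Real.sin_zero, Real.cos_zero, zero_mul, one_mul, neg_zero,
    Real.exp_zero] at hS hC hode
  have hJ2 : J'' 0 = G 0 - J' 0 - μ * J 0 := by linarith
  have hμ' : μ = (νI ^ 2 + 1) / 4 := by linarith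
  simp only [DplusPrincipal, DminusPrincipal, integral_Ici_eq_integral_Ioi, mul_sub]
  rw [integral_sub (integrableOn_exp_mul_bounded hsc hsb hG hGb)
      (integrableOn_exp_mul_bounded hsc hsb hG' hG'b),
    integral_sub (integrableOn_exp_mul_bounded hcc hcb hG hGb)
      (integrableOn_exp_mul_bounded hcc hcb hG' hG'b), hS, hC, hJ2, hμ']
  constructor
  · field_simp
    ring
  · field_simp
    ring
end
end
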